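/- arXiv:1209.1167 — 3 statements merged into one kernel-verified Lean document; each statement's English description precedes it below -/
import Mathlib

section
/- Suppose K is a regular m-polytope with automorphism group Γ(K) = ⟨ρ_0, ..., ρ_{m-1}⟩ (distinguished generators with respect to a base flag), Schläfli type {p_1, ..., p_{m-1}}, and facet set A (the set of faces of rank m-1). Then there exists a regular (m+1)-polytope K̄ of Schläfli type {p_1, ..., p_{m-1}, 4} whose facets (faces of rank m) are isomorphic to K, such that when K is finite the automorphism group of K̄ has order |Γ(K)| · 2^{|A|}. Moreover, K̄ is finite if and only if K is finite. -/
/-- Two flags are `j`-adjacent (w.r.t. the rank function `rk`): they are distinct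
and agree in every face whose rank is different from `j`. -/
def IsPolytopeAdj {P : Type*} [PartialOrder P] (rk : P → ℤ) (j : ℤ) (c d : Flag P) : Prop :=
  c ≠ d ∧ ∀ z : P, rk z ≠ j → (z ∈ c ↔ z ∈ d)

/-- `P`, with strictly monotone rank function `rk` onto `{-1, 0, ..., n}`, is an
abstract polytope of rank `n`: it has a least and a greatest face, satisfies the
diamond condition and is strongly flag-connected. -/
structure IsAbstractPolytope {P : Type*} [PartialOrder P] (n : ℤ) (rk : P → ℤ) : Prop where
  neg_one_le : -1 ≤ n
  strictMono : ∀ {F G : P}, F < G → rk F < rk G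
  rank_range : Set.range rk = Set.Icc (-1 : ℤ) n
  exists_bot : ∃ F₀ : P, ∀ F, F₀ ≤ F
  exists_top : ∃ Fn : P, ∀ F, F ≤ Fn
  diamond : ∀ F G : P, F < G → rk G = rk F + 2 →
    ∃ H₁ H₂ : P, H₁ ≠ H₂ ∧ ∀ H : P, (F < H ∧ H < G) ↔ (H = H₁ ∨ H = H₂)
  strongly_connected : ∀ F G : P, F ≤ G →
    ∀ c d : Flag ↥(Set.Icc F G),
      Relation.ReflTransGen
        (fun c' d' => ∃ j : ℤ, IsPolytopeAdj (fun H => rk H.val) j c' d') c d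

/-- A covering of polytopes: an order- and rank-preserving map sending flags to
flags and sending `j`-adjacent pairs of flags to `j`-adjacent pairs of flags. -/
def IsPolytopeCovering {R Q : Type*} [PartialOrder R] [PartialOrder Q]
    (rkR : R → ℤ) (rkQ : Q → ℤ) (η : R → Q) : Prop :=
  Monotone η ∧ (∀ F : R, rkQ (η F) = rkR F) ∧
  (∀ c : Flag R, ∃ c' : Flag Q, η '' ↑c = ↑c') ∧
  (∀ (j : ℤ) (c d : Flag R) (c' d' : Flag Q), η '' ↑c = ↑c' → η '' ↑d = ↑d' →
    IsPolytopeAdj rkR j c d → IsPolytopeAdj rkQ j c' d')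

/-- A polytope is regular if its automorphism group (order-preserving bijections)
acts transitively on the set of flags. -/
def IsRegularPolytope {P : Type*} [PartialOrder P] : Prop :=
  ∀ c d : Flag P, ∃ e : P ≃o P, e '' (↑c : Set P) = (↑d : Set P)

/-- An abstract polytope of rank `n`, bundled with its carrier. -/
structure BundledPolytope (n : ℤ) where
  carrier : Type
  [po : PartialOrder carrier]
  rk : carrier → ℤ
  isPolytope : IsAbstractPolytope n rk

attribute [instance] BundledPolytope.po


namespace PolytopeExtension

section MaximalChains

variable {P : Type*} [PartialOrder P]

/-- `c` is a maximal chain of the subposet `s`. -/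
def IsMaxChainIn (s c : Set P) : Prop :=
  c ⊆ s ∧ IsChain (· ≤ ·) c ∧ ∀ z ∈ s, (∀ w ∈ c, z ≤ w ∨ w ≤ z) → z ∈ c

/-- `j`-adjacency of chains, regarded as sets of faces. -/
def SetAdj (rk : P → ℤ) (j : ℤ) (c d : Set P) : Prop :=
  c ≠ d ∧ ∀ z : P, rk z ≠ j → (z ∈ c ↔ z ∈ d)

/-- One step in the flag graph of the subposet `s`. -/
def FlagStep (rk : P → ℤ) (s c d : Set P) : Prop :=
  IsMaxChainIn s c ∧ IsMaxChainIn s d ∧ ∃ j, SetAdj rk j c d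

/-- The flag graph of the subposet `s` is connected. -/
def FlagConnected (rk : P → ℤ) (s : Set P) : Prop :=
  ∀ c d, IsMaxChainIn s c → IsMaxChainIn s d → Relation.ReflTransGen (FlagStep rk s) c d

theorem Flag.isMaxChainIn_univ (c : Flag P) : IsMaxChainIn Set.univ (c : Set P) :=
  ⟨Set.subset_univ _, c.chain_le, fun _ _ h => Flag.mem_iff_forall_le_or_ge.2 fun w hw => h w hw⟩

theorem IsMaxChainIn.exists_flag {c : Set P} (h : IsMaxChainIn Set.univ c) :
    ∃ f : Flag P, (f : Set P) = c :=
  ⟨⟨c, h.2.1, fun _ ht hct => hct.antisymm fun z hz =>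
    h.2.2 z trivial fun _ hw => ht.total hz (hct hw)⟩, rfl⟩

theorem Flag.isMaxChainIn_image_val {s : Set P} (c : Flag s) :
    IsMaxChainIn s (Subtype.val '' (c : Set s)) := by
  refine ⟨by rintro _ ⟨x, -, rfl⟩; exact x.2, ?_, ?_⟩
  · rintro _ ⟨x, hx, rfl⟩ _ ⟨y, hy, rfl⟩ _
    exact c.chain_le.total hx hy
  · intro z hz h
    exact ⟨⟨z, hz⟩, Flag.mem_iff_forall_le_or_ge.2 fun w hw => h w ⟨w, hw, rfl⟩, rfl⟩

theorem IsMaxChainIn.exists_flag_subtype {s c : Set P} (h : IsMaxChainIn s c) :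
    ∃ f : Flag s, Subtype.val '' (f : Set s) = c := by
  refine ⟨⟨Subtype.val ⁻¹' c, ?_, ?_⟩, ?_⟩
  · intro x hx y hy _
    exact h.2.1.total (x := x.1) (y := y.1) hx hy
  · intro t ht hct
    refine hct.antisymm fun z hz => h.2.2 z z.2 fun w hw => ?_
    exact ht.total (x := z) (y := ⟨w, h.1 hw⟩) hz (hct hw)
  · exact Subtype.image_preimage_coe s c |>.trans (Set.inter_eq_right.2 h.1)

theorem setAdj_image_val {rk : P → ℤ} {j : ℤ} {s : Set P} {c d : Flag s} :
    SetAdj rk j (Subtype.val '' (c : Set s)) (Subtype.val '' (d : Set s)) ↔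
      IsPolytopeAdj (fun H : s => rk H.val) j c d := by
  refine and_congr ?_ ?_
  · rw [Ne, Subtype.val_injective.image_injective.eq_iff]
    exact not_congr ⟨Flag.ext, congrArg _⟩
  · refine ⟨fun h z hz => by simpa using h z hz, fun h z hz => ?_⟩
    by_cases hzs : z ∈ s
    · simpa [hzs] using h ⟨z, hzs⟩ hz
    · simp [hzs]

theorem flagConnected_iff {rk : P → ℤ} {s : Set P} :
    FlagConnected rk s ↔ ∀ c d : Flag s, Relation.ReflTransGen
      (fun c' d' => ∃ j : ℤ, IsPolytopeAdj (fun H : s => rk H.val) j c' d') c d := by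
  constructor
  · intro h c d
    have key : ∀ D, Relation.ReflTransGen (FlagStep rk s) (Subtype.val '' (c : Set s)) D →
        ∃ d : Flag s, Subtype.val '' (d : Set s) = D ∧ Relation.ReflTransGen
          (fun c' d' => ∃ j : ℤ, IsPolytopeAdj (fun H : s => rk H.val) j c' d') c d := by
      intro D hD
      induction hD with
      | refl => exact ⟨c, rfl, .refl⟩
      | tail _ hstep ih =>
        obtain ⟨b, rfl, hb⟩ := ih
        obtain ⟨-, hmax, j, hj⟩ := hstep
        obtain ⟨e, rfl⟩ := hmax.exists_flag_subtype
        exact ⟨e, rfl, hb.tail ⟨j, setAdj_image_val.1 hj⟩⟩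
    obtain ⟨d', hd', hc⟩ := key _ (h _ _ (Flag.isMaxChainIn_image_val c)
      (Flag.isMaxChainIn_image_val d))
    rwa [Flag.ext (Subtype.val_injective.image_injective hd')] at hc
  · intro h c d hc hd
    obtain ⟨c, rfl⟩ := hc.exists_flag_subtype
    obtain ⟨d, rfl⟩ := hd.exists_flag_subtype
    exact Relation.ReflTransGen.lift (fun f : Flag s => Subtype.val '' (f : Set s))
      (fun a b ⟨j, hj⟩ => ⟨Flag.isMaxChainIn_image_val a, Flag.isMaxChainIn_image_val b, j,
        setAdj_image_val.2 hj⟩) _ _ (h c d)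

theorem exists_isMaxChainIn_mem {s : Set P} {a : P} (ha : a ∈ s) :
    ∃ c, IsMaxChainIn s c ∧ a ∈ c := by
  obtain ⟨f, hf⟩ := (Set.subsingleton_singleton (a := (⟨a, ha⟩ : s))).isChain.exists_subset_flag
    (α := s)
  exact ⟨_, Flag.isMaxChainIn_image_val f, ⟨a, ha⟩, hf rfl, rfl⟩

theorem IsMaxChainIn.image_orderIso {c : Set P} (h : IsMaxChainIn Set.univ c) (e : P ≃o P) :
    IsMaxChainIn Set.univ (e '' c) := by
  refine ⟨Set.subset_univ _, h.2.1.image e, fun z _ hz => ?_⟩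
  refine ⟨e.symm z, h.2.2 _ trivial fun w hw => ?_, e.apply_symm_apply z⟩
  simpa [e.symm_apply_le, e.le_symm_apply] using hz (e w) ⟨w, hw, rfl⟩

theorem IsMaxChainIn.eq_of_subset {s c d : Set P} (hc : IsMaxChainIn s c) (hd : IsMaxChainIn s d)
    (h : c ⊆ d) : c = d :=
  h.antisymm fun z hz => hc.2.2 z (hd.1 hz) fun _ hw => hd.2.1.total hz (h hw)

theorem FlagStep.rank_mem_image {rk : P → ℤ} {c d : Set P} (h : FlagStep rk Set.univ c d)
    {z : P} (hz : z ∈ c) : ∃ w ∈ d, rk w = rk z := by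
  obtain ⟨hc, hd, j, hne, hj⟩ := h
  by_contra! hcon
  have hzj : rk z = j := by
    by_contra hzj
    exact hcon z ((hj z hzj).1 hz) rfl
  refine hne (hd.eq_of_subset hc fun w hw => (hj w fun h => ?_).2 hw).symm
  exact hcon w hw (h.trans hzj.symm)

end MaximalChains

section Polytope

variable {P : Type*} [PartialOrder P] {n : ℤ} {rk : P → ℤ} (hP : IsAbstractPolytope n rk)
include hP

theorem rank_mem (x : P) : -1 ≤ rk x ∧ rk x ≤ n := by
  have : rk x ∈ Set.range rk := ⟨x, rfl⟩
  rwa [hP.rank_range] at this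

theorem rank_mono {x y : P} (h : x ≤ y) : rk x ≤ rk y := by
  rcases h.eq_or_lt with rfl | h
  · exact le_rfl
  · exact (hP.strictMono h).le

theorem eq_of_le_of_rank_eq {x y : P} (h : x ≤ y) (hr : rk x = rk y) : x = y := by
  rcases h.eq_or_lt with h | h
  · exact h
  · exact absurd hr (hP.strictMono h).ne

theorem rank_top {t : P} (ht : ∀ x, x ≤ t) : rk t = n := by
  have : n ∈ Set.range rk := by
    rw [hP.rank_range]; exact ⟨hP.neg_one_le, le_rfl⟩
  obtain ⟨x, hx⟩ := this
  have := rank_mono hP (ht x)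
  have := rank_mem hP t
  lia

theorem rank_bot {b : P} (hb : ∀ x, b ≤ x) : rk b = -1 := by
  have : -1 ∈ Set.range rk := by
    rw [hP.rank_range]; exact ⟨le_rfl, hP.neg_one_le⟩
  obtain ⟨x, hx⟩ := this
  have := rank_mono hP (hb x)
  have := rank_mem hP b
  lia

theorem eq_top_of_rank_eq {t x : P} (ht : ∀ x, x ≤ t) (hx : rk x = n) : x = t :=
  eq_of_le_of_rank_eq hP (ht x) (hx.trans (rank_top hP ht).symm)

theorem eq_bot_of_rank_eq {b x : P} (hb : ∀ x, b ≤ x) (hx : rk x = -1) : x = b :=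
  (eq_of_le_of_rank_eq hP (hb x) (hx.trans (rank_bot hP hb).symm).symm).symm

theorem eq_of_mem_chain {c : Set P} (hc : IsChain (· ≤ ·) c) {x y : P} (hx : x ∈ c) (hy : y ∈ c)
    (h : rk x = rk y) : x = y := by
  rcases hc.total hx hy with h' | h'
  · exact eq_of_le_of_rank_eq hP h' h
  · exact (eq_of_le_of_rank_eq hP h' h.symm).symm

theorem lt_of_mem_chain {c : Set P} (hc : IsChain (· ≤ ·) c) {x y : P} (hx : x ∈ c) (hy : y ∈ c)
    (h : rk x < rk y) : x < y := by
  rcases hc.total hx hy with h' | h'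
  · exact lt_of_le_of_ne h' (by rintro rfl; exact lt_irrefl _ h)
  · exact absurd (rank_mono hP h') (not_le.2 h)

theorem flagConnected_Icc {F G : P} (h : F ≤ G) : FlagConnected rk (Set.Icc F G) :=
  flagConnected_iff.2 (hP.strongly_connected F G h)

theorem flagConnected_univ : FlagConnected rk (Set.univ : Set P) := by
  obtain ⟨b, hb⟩ := hP.exists_bot
  obtain ⟨t, ht⟩ := hP.exists_top
  have : (Set.univ : Set P) = Set.Icc b t := by ext x; simp [hb, ht]
  rw [this]
  exact flagConnected_Icc hP (hb t)

theorem exists_mem_rank_eq {c : Set P} (hc : IsMaxChainIn Set.univ c) {i : ℤ} (h1 : -1 ≤ i)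
    (h2 : i ≤ n) : ∃ z ∈ c, rk z = i := by
  have : i ∈ Set.range rk := by rw [hP.rank_range]; exact ⟨h1, h2⟩
  obtain ⟨x, rfl⟩ := this
  obtain ⟨d, hd, hx⟩ := exists_isMaxChainIn_mem (Set.mem_univ x)
  have hcon := flagConnected_univ hP d c hd hc
  clear hc
  induction hcon with
  | refl => exact ⟨x, hx, rfl⟩
  | tail _ hstep ih =>
    obtain ⟨z, hz, hzx⟩ := ih
    obtain ⟨w, hw, hwz⟩ := hstep.rank_mem_image hz
    exact ⟨w, hw, hwz.trans hzx⟩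

theorem rank_le_rank_apply (e : P ≃o P) (x : P) : rk x ≤ rk (e x) := by
  have key : ∀ k : ℕ, ∀ x, rk x = -1 + k → rk x ≤ rk (e x) := by
    intro k
    induction k with
    | zero =>
      intro x hx
      have := rank_mem hP (e x)
      lia
    | succ k ih =>
      intro x hx
      obtain ⟨c, hc, hxc⟩ := exists_isMaxChainIn_mem (Set.mem_univ x)
      have := rank_mem hP x
      obtain ⟨y, hyc, hy⟩ := exists_mem_rank_eq hP hc (i := -1 + k) (by lia) (by lia)
      have := hP.strictMono (e.strictMono (lt_of_mem_chain hP hc.2.1 hyc hxc (by lia)))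
      have := ih y hy
      lia
  have := rank_mem hP x
  exact key (rk x + 1).toNat x (by lia)

theorem rank_apply (e : P ≃o P) (x : P) : rk (e x) = rk x := by
  have := rank_le_rank_apply hP e x
  have := rank_le_rank_apply hP e.symm (e x)
  rw [e.symm_apply_apply] at this
  lia

theorem SetAdj.image {j : ℤ} {c d : Set P} (h : SetAdj rk j c d) (e : P ≃o P) :
    SetAdj rk j (e '' c) (e '' d) := by
  refine ⟨fun heq => h.1 (e.injective.image_injective heq), fun z hz => ?_⟩
  have hz' : rk (e.symm z) ≠ j := by rwa [rank_apply hP]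
  rw [e.image_eq_preimage_symm, e.image_eq_preimage_symm]
  exact h.2 _ hz'

theorem SetAdj.notMem {j : ℤ} {c d : Set P} (hc : IsMaxChainIn Set.univ c)
    (hd : IsMaxChainIn Set.univ d) (h : SetAdj rk j c d) {z : P} (hz : z ∈ d) (hzj : rk z = j) :
    z ∉ c := by
  intro hzc
  refine h.1 (hc.eq_of_subset hd fun w hw => ?_)
  by_cases hwj : rk w = j
  · rwa [eq_of_mem_chain hP hc.2.1 hw hzc (hwj.trans hzj.symm)]
  · exact (h.2 w hwj).1 hw

/-- A flag has at most one `j`-adjacent flag. -/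
theorem SetAdj.unique {j : ℤ} {c d d' : Set P} (hc : IsMaxChainIn Set.univ c)
    (hd : IsMaxChainIn Set.univ d) (hd' : IsMaxChainIn Set.univ d') (h : SetAdj rk j c d)
    (h' : SetAdj rk j c d') : d = d' := by
  refine hd.eq_of_subset hd' fun z hz => ?_
  by_cases hzj : rk z = j
  swap
  · exact (h'.2 z hzj).1 ((h.2 z hzj).2 hz)
  have hzc := SetAdj.notMem hP hc hd h hz hzj
  have hmem := rank_mem hP z
  obtain ⟨w, hw, hwr⟩ := exists_mem_rank_eq hP hc hmem.1 hmem.2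
  obtain ⟨z', hz', hzr'⟩ := exists_mem_rank_eq hP hd' hmem.1 hmem.2
  have hzc' := SetAdj.notMem hP hc hd' h' hz' (hzr'.trans hzj)
  obtain ⟨b, hb⟩ := hP.exists_bot
  obtain ⟨t, ht⟩ := hP.exists_top
  have hj1 : rk z ≠ -1 := by
    intro h
    rw [eq_bot_of_rank_eq hP hb (hwr.trans h), ← eq_bot_of_rank_eq hP hb h] at hw
    exact hzc hw
  have hj2 : rk z ≠ n := by
    intro h
    rw [eq_top_of_rank_eq hP ht (hwr.trans h), ← eq_top_of_rank_eq hP ht h] at hw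
    exact hzc hw
  obtain ⟨u, hu, hur⟩ := exists_mem_rank_eq hP hc (i := rk z - 1) (by lia) (by lia)
  obtain ⟨v, hv, hvr⟩ := exists_mem_rank_eq hP hc (i := rk z + 1) (by lia) (by lia)
  obtain ⟨H₁, H₂, -, hH⟩ := hP.diamond u v
    (lt_of_mem_chain hP hc.2.1 hu hv (by lia)) (by lia)
  have hbetween : ∀ e, IsChain (· ≤ ·) e → u ∈ e → v ∈ e → ∀ y ∈ e, rk y = rk z →
      y = H₁ ∨ y = H₂ := fun e he hue hve y hy hyr =>
    (hH y).1 ⟨lt_of_mem_chain hP he hue hy (by lia), lt_of_mem_chain hP he hy hve (by lia)⟩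
  have hwH := hbetween c hc.2.1 hu hv w hw hwr
  have hzH := hbetween d hd.2.1 ((h.2 u (by lia)).1 hu) ((h.2 v (by lia)).1 hv) z hz rfl
  have hzH' := hbetween d' hd'.2.1 ((h'.2 u (by lia)).1 hu) ((h'.2 v (by lia)).1 hv) z' hz' hzr'
  have hwz : w ≠ z := by rintro rfl; exact hzc hw
  have hwz' : w ≠ z' := by rintro rfl; exact hzc' hw
  have : z = z' := by grind
  rwa [this]

theorem apply_eq_of_image_eq {c : Set P} (hc : IsMaxChainIn Set.univ c) {e : P ≃o P}
    (he : e '' c = c) {x : P} (hx : x ∈ c) : e x = x :=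
  eq_of_mem_chain hP hc.2.1 (he ▸ Set.mem_image_of_mem e hx) hx (rank_apply hP e x)

/-- An automorphism of a polytope fixing a flag is trivial. -/
theorem eq_one_of_image_eq {c : Set P} (hc : IsMaxChainIn Set.univ c) (e : P ≃o P)
    (he : e '' c = c) : e = 1 := by
  have key : ∀ d, Relation.ReflTransGen (FlagStep rk Set.univ) c d → e '' d = d := by
    intro d hd
    induction hd with
    | refl => exact he
    | tail _ hstep ih =>
      obtain ⟨hb, hd, j, hj⟩ := hstep
      exact SetAdj.unique hP hb (hd.image_orderIso e) hd (ih ▸ SetAdj.image hP hj e) hj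
  ext x
  obtain ⟨d, hd, hx⟩ := exists_isMaxChainIn_mem (Set.mem_univ x)
  exact apply_eq_of_image_eq hP hd (key d (flagConnected_univ hP c d hc hd)) hx

/-- An automorphism mapping a flag to an adjacent flag is an involution. -/
theorem mul_self_eq_one_of_setAdj {c : Set P} (hc : IsMaxChainIn Set.univ c) {g : P ≃o P} {j : ℤ}
    (h : SetAdj rk j c (g '' c)) : g * g = 1 := by
  have hgc := hc.image_orderIso g
  refine eq_one_of_image_eq hP hc _ ?_
  rw [RelIso.coe_mul, Set.image_comp]
  exact SetAdj.unique hP hgc (hgc.image_orderIso g) hc (SetAdj.image hP h g)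
    ⟨h.1.symm, fun z hz => (h.2 z hz).symm⟩

end Polytope

section Extension

/-- A proper face of the extension: a face of `K` together with a finite set of elements of `A`
(coordinates in `C₂^A`), normalised to avoid the elements of `A` lying above that face. -/
@[ext]
structure ExtFace {K : Type*} [PartialOrder K] (A : Set K) where
  face : K
  supp : Finset K
  avoids : ∀ a ∈ supp, a ∈ A ∧ ¬ face ≤ a

variable {K : Type*} [PartialOrder K] {A : Set K}

namespace ExtFace

instance : PartialOrder (ExtFace A) where
  le x y := x.face ≤ y.face ∧ ∀ a, ¬ x.face ≤ a → (a ∈ x.supp ↔ a ∈ y.supp)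
  le_refl x := ⟨le_rfl, fun _ _ => Iff.rfl⟩
  le_trans x y z hxy hyz := ⟨hxy.1.trans hyz.1, fun a ha =>
    (hxy.2 a ha).trans (hyz.2 a fun h => ha (hxy.1.trans h))⟩
  le_antisymm x y hxy hyx := by
    have hface : x.face = y.face := hxy.1.antisymm hyx.1
    refine ExtFace.ext hface (Finset.ext fun a => ?_)
    by_cases ha : x.face ≤ a
    · exact iff_of_false (fun h => (x.avoids a h).2 ha) (fun h => (y.avoids a h).2 (hface ▸ ha))
    · exact hxy.2 a ha

theorem le_def {x y : ExtFace A} :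
    x ≤ y ↔ x.face ≤ y.face ∧ ∀ a, ¬ x.face ≤ a → (a ∈ x.supp ↔ a ∈ y.supp) :=
  Iff.rfl

open scoped Classical in
/-- The face over `F` with coordinates `T`. -/
noncomputable def proj (A : Set K) (T : Finset K) (F : K) : ExtFace A :=
  ⟨F, T.filter fun a => a ∈ A ∧ ¬ F ≤ a, by simp⟩

@[simp]
theorem proj_face (T : Finset K) (F : K) : (proj A T F).face = F := rfl

@[simp]
theorem mem_proj_supp {T : Finset K} {F a : K} :
    a ∈ (proj A T F).supp ↔ a ∈ T ∧ a ∈ A ∧ ¬ F ≤ a := by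
  simp [proj]

theorem proj_le_proj {T U : Finset K} {F G : K} :
    proj A T F ≤ proj A U G ↔ F ≤ G ∧ ∀ a ∈ A, ¬ F ≤ a → (a ∈ T ↔ a ∈ U) := by
  simp only [le_def, proj_face, mem_proj_supp]
  refine and_congr_right fun h => forall_congr' fun a => ?_
  have : ¬ F ≤ a → ¬ G ≤ a := fun h' h'' => h' (h.trans h'')
  tauto

theorem proj_eq_proj {T U : Finset K} {F G : K} :
    proj A T F = proj A U G ↔ F = G ∧ ∀ a ∈ A, ¬ F ≤ a → (a ∈ T ↔ a ∈ U) := by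
  constructor
  · intro h
    exact ⟨congrArg face h, (proj_le_proj.1 h.le).2⟩
  · rintro ⟨rfl, h⟩
    exact le_antisymm (proj_le_proj.2 ⟨le_rfl, h⟩)
      (proj_le_proj.2 ⟨le_rfl, fun a ha h' => (h a ha h').symm⟩)

theorem proj_supp_face (x : ExtFace A) : proj A x.supp x.face = x := by
  ext a
  · rfl
  · rw [mem_proj_supp]
    exact ⟨fun h => h.1, fun h => ⟨h, x.avoids a h⟩⟩

theorem proj_le_proj_same {T : Finset K} {F G : K} : proj A T F ≤ proj A T G ↔ F ≤ G := by
  simp [proj_le_proj]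

theorem eq_proj_of_le_proj {x : ExtFace A} {T : Finset K} {G : K} (h : x ≤ proj A T G) :
    x = proj A T x.face := by
  rw [← proj_supp_face x] at h ⊢
  exact proj_eq_proj.2 ⟨rfl, (proj_le_proj.1 h).2⟩

/-- The action of an automorphism of `K` on the proper faces of the extension. -/
def map (hA : ∀ (g : K ≃o K) (a : K), g a ∈ A ↔ a ∈ A) (g : K ≃o K) : ExtFace A ≃o ExtFace A where
  toFun x := ⟨g x.face, x.supp.map g.toEquiv.toEmbedding, by
    intro a ha
    obtain ⟨b, hb, rfl⟩ := Finset.mem_map.1 ha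
    exact ⟨(hA g b).2 (x.avoids b hb).1, fun h => (x.avoids b hb).2 (g.le_iff_le.1 h)⟩⟩
  invFun x := ⟨g.symm x.face, x.supp.map g.symm.toEquiv.toEmbedding, by
    intro a ha
    obtain ⟨b, hb, rfl⟩ := Finset.mem_map.1 ha
    exact ⟨(hA g.symm b).2 (x.avoids b hb).1,
      fun h => (x.avoids b hb).2 (g.symm.le_iff_le.1 h)⟩⟩
  left_inv x := by
    ext a
    · simp
    · simp [Finset.mem_map_equiv]
  right_inv x := by
    ext a
    · simp
    · simp [Finset.mem_map_equiv]
  map_rel_iff' {x y} := by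
    simp only [le_def, Equiv.coe_fn_mk, g.le_iff_le, Finset.mem_map_equiv]
    refine and_congr_right fun _ => ⟨fun h a ha => ?_, fun h a ha => ?_⟩
    · have := h (g a) (by simpa using ha)
      simpa using this
    · exact h (g.symm a) (by simpa [g.le_symm_apply] using ha)

theorem map_proj (hA : ∀ (g : K ≃o K) (a : K), g a ∈ A ↔ a ∈ A) (g : K ≃o K) (T : Finset K)
    (F : K) : map hA g (proj A T F) = proj A (T.map g.toEquiv.toEmbedding) (g F) := by
  have hmem : ∀ a, g.symm a ∈ A ↔ a ∈ A := hA g.symm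
  ext a
  · rfl
  · change a ∈ Finset.map _ _ ↔ _
    simp [Finset.mem_map_equiv, -Finset.mem_map, hmem, g.le_symm_apply]

open scoped Classical in
/-- Translation of the coordinates by `T`. -/
noncomputable def translate (T : Finset K) : ExtFace A ≃o ExtFace A where
  toFun x := proj A (symmDiff x.supp T) x.face
  invFun x := proj A (symmDiff x.supp T) x.face
  left_inv x := by
    conv_rhs => rw [← proj_supp_face x]
    rw [proj_eq_proj]
    refine ⟨rfl, fun a ha h => ?_⟩
    simp only [proj_face] at h
    simp only [Finset.mem_symmDiff, mem_proj_supp]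
    tauto
  right_inv x := by
    conv_rhs => rw [← proj_supp_face x]
    rw [proj_eq_proj]
    refine ⟨rfl, fun a ha h => ?_⟩
    simp only [proj_face] at h
    simp only [Finset.mem_symmDiff, mem_proj_supp]
    tauto
  map_rel_iff' {x y} := by
    conv_rhs => rw [← proj_supp_face x, ← proj_supp_face y]
    simp only [Equiv.coe_fn_mk, proj_le_proj, Finset.mem_symmDiff]
    refine and_congr_right fun _ => forall_congr' fun a => ?_
    tauto

open scoped Classical in
theorem translate_proj (U T : Finset K) (F : K) :
    translate U (proj A T F) = proj A (symmDiff T U) F := by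
  refine proj_eq_proj.2 ⟨rfl, fun a ha h => ?_⟩
  simp only [proj_face] at h
  simp only [Finset.mem_symmDiff, mem_proj_supp]
  tauto

end ExtFace

open ExtFace

/-- The homomorphism from the automorphisms of `K` to those of its extension. -/
def liftHom (hA : ∀ (g : K ≃o K) (a : K), g a ∈ A ↔ a ∈ A) :
    (K ≃o K) →* (WithTop (ExtFace A) ≃o WithTop (ExtFace A)) where
  toFun g := (ExtFace.map hA g).withTopCongr
  map_one' := by
    ext x
    induction x using WithTop.recTopCoe with
    | top => rfl
    | coe x =>
      refine congrArg WithTop.some (?_ : ExtFace.map hA 1 x = x)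
      exact ExtFace.ext rfl Finset.map_refl
  map_mul' g h := by
    ext x
    induction x using WithTop.recTopCoe with
    | top => rfl
    | coe x =>
      refine congrArg WithTop.some
        (?_ : ExtFace.map hA (g * h) x = ExtFace.map hA g (ExtFace.map hA h x))
      refine ExtFace.ext rfl (Finset.ext fun a => ?_)
      change a ∈ Finset.map _ _ ↔ a ∈ Finset.map _ (Finset.map _ _)
      simp only [Finset.mem_map_equiv]
      rfl

/-- The translation by `T` as an automorphism of the extension. -/
noncomputable def shift (T : Finset K) : WithTop (ExtFace A) ≃o WithTop (ExtFace A) :=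
  (translate T).withTopCongr

/-- The chain of the extension determined by a chain of `K` and the coordinates `T`. -/
def liftChain (A : Set K) (T : Finset K) (c : Set K) : Set (WithTop (ExtFace A)) :=
  insert ⊤ ((fun F => ((proj A T F : ExtFace A) : WithTop (ExtFace A))) '' c)

@[simp]
theorem top_mem_liftChain {T : Finset K} {c : Set K} : ⊤ ∈ liftChain A T c :=
  Set.mem_insert _ _

@[simp]
theorem coe_mem_liftChain {T : Finset K} {c : Set K} {x : ExtFace A} :
    (x : WithTop (ExtFace A)) ∈ liftChain A T c ↔ x.face ∈ c ∧ x = proj A T x.face := by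
  constructor
  · rintro (h | ⟨F, hF, h⟩)
    · simp at h
    · obtain rfl := WithTop.coe_injective h
      exact ⟨hF, rfl⟩
  · rintro ⟨h, hx⟩
    exact Or.inr ⟨_, h, congrArg _ hx.symm⟩

theorem liftHom_coe_proj (hA : ∀ (g : K ≃o K) (a : K), g a ∈ A ↔ a ∈ A) (g : K ≃o K)
    (T : Finset K) (F : K) : liftHom hA g ((proj A T F : ExtFace A) : WithTop (ExtFace A)) =
      ((proj A (T.map g.toEquiv.toEmbedding) (g F) : ExtFace A) : WithTop (ExtFace A)) :=
  congrArg _ (map_proj hA g T F)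

open scoped Classical in
theorem shift_coe_proj (U T : Finset K) (F : K) :
    shift U ((proj A T F : ExtFace A) : WithTop (ExtFace A)) =
      ((proj A (symmDiff T U) F : ExtFace A) : WithTop (ExtFace A)) :=
  congrArg _ (translate_proj U T F)

theorem liftHom_image_liftChain (hA : ∀ (g : K ≃o K) (a : K), g a ∈ A ↔ a ∈ A) (g : K ≃o K)
    (T : Finset K) (c : Set K) :
    liftHom hA g '' liftChain A T c = liftChain A (T.map g.toEquiv.toEmbedding) (g '' c) := by
  simp only [liftChain, Set.image_insert_eq, Set.image_image, liftHom_coe_proj, OrderIso.map_top]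

open scoped Classical in
theorem shift_image_liftChain (U T : Finset K) (c : Set K) :
    shift U '' liftChain A T c = liftChain A (symmDiff T U) c := by
  simp only [liftChain, Set.image_insert_eq, Set.image_image, shift_coe_proj, OrderIso.map_top]

theorem orderIso_ext_proj {e f : WithTop (ExtFace A) ≃o WithTop (ExtFace A)}
    (h : ∀ T F, e ((proj A T F : ExtFace A) : WithTop (ExtFace A)) = f (proj A T F : ExtFace A)) :
    e = f := by
  ext x
  induction x using WithTop.recTopCoe with
  | top => simp
  | coe x => rw [← proj_supp_face x, h]

theorem liftHom_injective (hA : ∀ (g : K ≃o K) (a : K), g a ∈ A ↔ a ∈ A) :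
    Function.Injective (liftHom hA) := by
  intro g h hgh
  ext F
  have := congrArg (fun e => e ((proj A ∅ F : ExtFace A) : WithTop (ExtFace A))) hgh
  simp only [liftHom_coe_proj] at this
  exact (proj_eq_proj.1 (WithTop.coe_injective this)).1

open scoped Classical in
theorem shift_mul_shift (T U : Finset K) :
    (shift T * shift U : WithTop (ExtFace A) ≃o WithTop (ExtFace A)) = shift (symmDiff T U) := by
  refine orderIso_ext_proj fun V F => ?_
  rw [RelIso.mul_apply, shift_coe_proj, shift_coe_proj, shift_coe_proj, symmDiff_assoc,
    symmDiff_comm U T]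

theorem shift_empty : (shift ∅ : WithTop (ExtFace A) ≃o WithTop (ExtFace A)) = 1 := by
  classical
  refine orderIso_ext_proj fun V F => ?_
  rw [shift_coe_proj, RelIso.one_apply]
  exact congrArg _ (proj_eq_proj.2 ⟨rfl, by simp [Finset.mem_symmDiff]⟩)

theorem liftHom_mul_shift (hA : ∀ (g : K ≃o K) (a : K), g a ∈ A ↔ a ∈ A) (g : K ≃o K)
    (T : Finset K) : liftHom hA g * shift T = shift (T.map g.toEquiv.toEmbedding) * liftHom hA g := by
  classical
  refine orderIso_ext_proj fun V F => ?_
  rw [RelIso.mul_apply, RelIso.mul_apply, shift_coe_proj, liftHom_coe_proj, liftHom_coe_proj,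
    shift_coe_proj]
  refine congrArg _ (proj_eq_proj.2 ⟨rfl, fun a _ _ => ?_⟩)
  simp only [Finset.mem_map_equiv, Finset.mem_symmDiff]

end Extension

section ExtensionPolytope

open ExtFace

variable {K : Type*} [PartialOrder K] {n : ℤ} {rk : K → ℤ}

/-- The rank function of the extension. -/
def extRank {A : Set K} (n : ℤ) (rk : K → ℤ) : WithTop (ExtFace A) → ℤ :=
  WithTop.recTopCoe (n + 1) fun x => rk x.face

@[simp]
theorem extRank_top {A : Set K} : extRank n rk (⊤ : WithTop (ExtFace A)) = n + 1 := rfl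

@[simp]
theorem extRank_coe {A : Set K} (x : ExtFace A) :
    extRank n rk (x : WithTop (ExtFace A)) = rk x.face := rfl

/-- The faces of rank `n - 1`. -/
def facets (n : ℤ) (rk : K → ℤ) : Set K := {F | rk F = n - 1}

theorem SetAdj.liftChain {A : Set K} {j : ℤ} {c d : Set K} (h : SetAdj rk j c d) (T : Finset K) :
    SetAdj (extRank n rk) j (liftChain A T c) (liftChain A T d) := by
  constructor
  · intro heq
    refine h.1 (Set.ext fun F => ?_)
    have := Set.ext_iff.1 heq ((proj A T F : ExtFace A) : WithTop (ExtFace A))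
    simpa using this
  · intro z hz
    induction z using WithTop.recTopCoe with
    | top => simp
    | coe x =>
      rw [coe_mem_liftChain, coe_mem_liftChain, h.2 _ hz]

variable {A : Set K}

theorem IsMaxChainIn.image_proj {T : Finset K} {F G : K} {c : Set K}
    (hc : IsMaxChainIn (Set.Icc F G) c) :
    IsMaxChainIn (Set.Icc ((proj A T F : ExtFace A) : WithTop (ExtFace A)) (proj A T G : ExtFace A))
      ((fun F => ((proj A T F : ExtFace A) : WithTop (ExtFace A))) '' c) := by
  refine ⟨?_, ?_, ?_⟩
  · rintro _ ⟨H, hH, rfl⟩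
    simpa [proj_le_proj_same] using hc.1 hH
  · rintro _ ⟨H, hH, rfl⟩ _ ⟨H', hH', rfl⟩ -
    simpa [proj_le_proj_same] using hc.2.1.total hH hH'
  · rintro z ⟨hz1, hz2⟩ h
    induction z using WithTop.recTopCoe with
    | top => simp at hz2
    | coe x =>
      rw [WithTop.coe_le_coe] at hz1 hz2
      have hx := eq_proj_of_le_proj hz2
      refine ⟨x.face, hc.2.2 _ ⟨hz1.1, hz2.1⟩ fun w hw => ?_, congrArg _ hx.symm⟩
      have := h _ ⟨w, hw, rfl⟩
      rw [hx] at this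
      simpa [proj_le_proj_same] using this

theorem exists_eq_image_proj {T : Finset K} {F G : K} {d : Set (WithTop (ExtFace A))}
    (hd : IsMaxChainIn
      (Set.Icc ((proj A T F : ExtFace A) : WithTop (ExtFace A)) (proj A T G : ExtFace A)) d) :
    ∃ c, IsMaxChainIn (Set.Icc F G) c ∧
      d = (fun F => ((proj A T F : ExtFace A) : WithTop (ExtFace A))) '' c := by
  have hform : ∀ z ∈ d, ∃ H, z = ((proj A T H : ExtFace A) : WithTop (ExtFace A)) := by
    intro z hz
    have := (hd.1 hz).2
    induction z using WithTop.recTopCoe with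
    | top => simp at this
    | coe x => exact ⟨_, congrArg _ (eq_proj_of_le_proj (WithTop.coe_le_coe.1 this))⟩
  refine ⟨(fun F => ((proj A T F : ExtFace A) : WithTop (ExtFace A))) ⁻¹' d, ⟨?_, ?_, ?_⟩, ?_⟩
  · intro H hH
    simpa [proj_le_proj_same] using hd.1 hH
  · intro H hH H' hH' _
    simpa [proj_le_proj_same] using hd.2.1.total hH hH'
  · intro H hH h
    refine hd.2.2 _ (by simpa [proj_le_proj_same] using hH) fun w hw => ?_
    obtain ⟨H', rfl⟩ := hform w hw
    simpa [proj_le_proj_same] using h H' hw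
  · refine (Set.image_preimage_eq_of_subset fun z hz => ?_).symm
    obtain ⟨H, rfl⟩ := hform z hz
    exact ⟨H, rfl⟩

theorem SetAdj.image_proj {j : ℤ} {c d : Set K} (h : SetAdj rk j c d) (T : Finset K) :
    SetAdj (extRank n rk) j ((fun F => ((proj A T F : ExtFace A) : WithTop (ExtFace A))) '' c)
      ((fun F => ((proj A T F : ExtFace A) : WithTop (ExtFace A))) '' d) := by
  have hinj : Function.Injective fun F => ((proj A T F : ExtFace A) : WithTop (ExtFace A)) :=
    fun F G h => (proj_eq_proj.1 (WithTop.coe_injective h)).1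
  refine ⟨fun heq => h.1 (hinj.image_injective heq), fun z hz => ?_⟩
  constructor <;> rintro ⟨H, hH, rfl⟩
  · exact ⟨H, (h.2 H hz).1 hH, rfl⟩
  · exact ⟨H, (h.2 H hz).2 hH, rfl⟩

theorem flagConnected_Icc_proj {T : Finset K} {F G : K}
    (h : FlagConnected rk (Set.Icc F G)) :
    FlagConnected (extRank n rk)
      (Set.Icc ((proj A T F : ExtFace A) : WithTop (ExtFace A)) (proj A T G : ExtFace A)) := by
  intro c d hc hd
  obtain ⟨c, hc', rfl⟩ := exists_eq_image_proj hc
  obtain ⟨d, hd', rfl⟩ := exists_eq_image_proj hd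
  exact Relation.ReflTransGen.lift
    (Set.image fun F => ((proj A T F : ExtFace A) : WithTop (ExtFace A)))
    (fun a b ⟨ha, hb, j, hj⟩ => ⟨ha.image_proj, hb.image_proj, j, hj.image_proj T⟩) _ _
    (h c d hc' hd')

variable {t : K}

theorem IsMaxChainIn.liftChain (ht : ∀ x, x ≤ t) {S T : Finset K} {F : K} {c : Set K}
    (hc : IsMaxChainIn (Set.Icc F t) c) (hST : ∀ a ∈ A, ¬ F ≤ a → (a ∈ S ↔ a ∈ T)) :
    IsMaxChainIn (Set.Icc ((proj A S F : ExtFace A) : WithTop (ExtFace A)) ⊤)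
      (liftChain A T c) := by
  have htc : t ∈ c := hc.2.2 t ⟨ht F, le_rfl⟩ fun w _ => Or.inr (ht w)
  have hFT : proj A S F = proj A T F := proj_eq_proj.2 ⟨rfl, hST⟩
  rw [hFT]
  refine ⟨?_, ?_, ?_⟩
  · rintro _ (rfl | ⟨H, hH, rfl⟩)
    · simp
    · simpa [proj_le_proj_same] using (hc.1 hH).1
  · rintro _ (rfl | ⟨H, hH, rfl⟩) _ (rfl | ⟨H', hH', rfl⟩) -
    · simp
    · simp
    · simp
    · simpa [proj_le_proj_same] using hc.2.1.total hH hH'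
  · rintro z ⟨hz1, -⟩ h
    induction z using WithTop.recTopCoe with
    | top => simp
    | coe x =>
      rw [WithTop.coe_le_coe] at hz1
      have hx : x = proj A T x.face := by
        rcases h ((proj A T t : ExtFace A) : WithTop (ExtFace A)) (by simpa using htc) with h' | h'
        · exact eq_proj_of_le_proj (WithTop.coe_le_coe.1 h')
        · rw [WithTop.coe_le_coe] at h'
          have hxt : x.face = t := le_antisymm (ht _) h'.1
          rw [← proj_supp_face x] at h' ⊢
          refine proj_eq_proj.2 ⟨rfl, fun a ha hxa => ((proj_le_proj.1 h').2 a ha ?_).symm⟩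
          rwa [hxt] at hxa
      rw [coe_mem_liftChain]
      refine ⟨hc.2.2 _ ⟨hz1.1, ht _⟩ fun w hw => ?_, hx⟩
      have := h ((proj A T w : ExtFace A) : WithTop (ExtFace A)) (by simpa using hw)
      rw [hx] at this
      simpa [proj_le_proj_same] using this

theorem exists_eq_liftChain (hK : IsAbstractPolytope n rk) (ht : ∀ x, x ≤ t) {S : Finset K} {F : K}
    {d : Set (WithTop (ExtFace A))}
    (hd : IsMaxChainIn (Set.Icc ((proj A S F : ExtFace A) : WithTop (ExtFace A)) ⊤) d) :
    ∃ T c, (∀ a ∈ T, a ∈ A) ∧ (∀ a ∈ A, ¬ F ≤ a → (a ∈ S ↔ a ∈ T)) ∧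
      IsMaxChainIn (Set.Icc F t) c ∧ d = liftChain A T c := by
  have hFd : ((proj A S F : ExtFace A) : WithTop (ExtFace A)) ∈ d :=
    hd.2.2 _ ⟨le_rfl, le_top⟩ fun w hw => Or.inl (hd.1 hw).1
  obtain ⟨r, ⟨y, hyd, hyr⟩, hmax⟩ := Int.exists_greatest_of_bdd
    (P := fun r => ∃ y : ExtFace A, (y : WithTop (ExtFace A)) ∈ d ∧ rk y.face = r)
    ⟨n, by rintro z ⟨y, -, rfl⟩; exact (rank_mem hK _).2⟩ ⟨_, _, hFd, rfl⟩
  have hle : ∀ x : ExtFace A, (x : WithTop (ExtFace A)) ∈ d → x ≤ proj A y.supp t := by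
    intro x hx
    have hyt : y ≤ proj A y.supp t := by
      conv_lhs => rw [← proj_supp_face y]
      exact proj_le_proj_same.2 (ht _)
    rcases hd.2.1.total hx hyd with h | h
    · exact (WithTop.coe_le_coe.1 h).trans hyt
    · rw [WithTop.coe_le_coe] at h
      have hface : y.face = x.face :=
        eq_of_le_of_rank_eq hK h.1 (le_antisymm (rank_mono hK h.1) (hyr ▸ hmax _ ⟨x, hx, rfl⟩))
      have : y = x := by
        rw [← proj_supp_face x, ← proj_supp_face y] at h ⊢
        exact proj_eq_proj.2 ⟨hface, (proj_le_proj.1 h).2⟩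
      exact this ▸ hyt
  have hform : ∀ x : ExtFace A, (x : WithTop (ExtFace A)) ∈ d → x = proj A y.supp x.face :=
    fun x hx => eq_proj_of_le_proj (hle x hx)
  have hFT := (proj_le_proj.1 (hle _ hFd)).2
  have hFT' : proj A S F = proj A y.supp F := proj_eq_proj.2 ⟨rfl, hFT⟩
  refine ⟨y.supp, {H | ((proj A y.supp H : ExtFace A) : WithTop (ExtFace A)) ∈ d},
    fun a ha => (y.avoids a ha).1, hFT, ⟨?_, ?_, ?_⟩, ?_⟩
  · intro H hH
    have := (hd.1 hH).1
    rw [hFT'] at this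
    exact ⟨by simpa [proj_le_proj_same] using this, ht H⟩
  · intro H hH H' hH' _
    simpa [proj_le_proj_same] using hd.2.1.total hH hH'
  · intro H hH h
    refine hd.2.2 _ ⟨?_, le_top⟩ fun w hw => ?_
    · rw [hFT']
      simpa [proj_le_proj_same] using hH.1
    · induction w using WithTop.recTopCoe with
      | top => simp
      | coe x =>
        have hx := hform x hw
        rw [hx] at hw ⊢
        simpa [proj_le_proj_same] using h x.face hw
  · ext z
    induction z using WithTop.recTopCoe with
    | top => simpa using hd.2.2 ⊤ ⟨le_top, le_rfl⟩ fun w _ => Or.inr le_top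
    | coe x =>
      rw [coe_mem_liftChain]
      refine ⟨fun h => ?_, fun h => ?_⟩
      · have hx := hform x h
        exact ⟨by rw [hx] at h; exact h, hx⟩
      · rw [h.2]; exact h.1

open scoped Classical in
theorem setAdj_liftChain_symmDiff (hK : IsAbstractPolytope n rk) (ht : ∀ x, x ≤ t) {F a : K}
    {c : Set K} (hc : IsMaxChainIn (Set.Icc F t) c) (ha : a ∈ c) (han : a ∈ facets n rk)
    (T : Finset K) :
    SetAdj (extRank n rk) n (liftChain (facets n rk) T c)
      (liftChain (facets n rk) (symmDiff T {a}) c) := by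
  have hta : ¬ t ≤ a := fun h => by
    have := rank_mono hK h
    have := rank_top hK ht
    have : rk a = n - 1 := han
    lia
  have htc : t ∈ c := hc.2.2 t ⟨(hc.1 ha).1.trans (ht a), le_rfl⟩ fun w _ => Or.inr (ht w)
  constructor
  · intro heq
    have h : ((proj (facets n rk) T t : ExtFace _) : WithTop (ExtFace (facets n rk))) ∈
      liftChain (facets n rk) T c := by simpa using htc
    rw [heq, coe_mem_liftChain] at h
    have := (proj_eq_proj.1 h.2).2 a han hta
    simp only [Finset.mem_symmDiff, Finset.mem_singleton] at this
    tauto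
  · intro z hz
    induction z using WithTop.recTopCoe with
    | top => simp
    | coe x =>
      rw [coe_mem_liftChain, coe_mem_liftChain]
      refine and_congr_right fun hxc => ?_
      have hxa : x.face ≤ a := by
        rcases hc.2.1.total hxc ha with h | h
        · exact h
        · refine (eq_of_le_of_rank_eq hK h ?_).ge
          have := rank_mono hK h
          have := (rank_mem hK x.face).2
          have : rk a = n - 1 := han
          rw [extRank_coe] at hz
          lia
      have : proj (facets n rk) T x.face = proj (facets n rk) (symmDiff T {a}) x.face := by
        refine proj_eq_proj.2 ⟨rfl, fun b _ hxb => ?_⟩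
        have : b ≠ a := by rintro rfl; exact hxb hxa
        simp [Finset.mem_symmDiff, this]
      rw [this]

theorem flagConnected_Icc_top (hK : IsAbstractPolytope n rk) (ht : ∀ x, x ≤ t) (S : Finset K)
    (F : K) : FlagConnected (extRank n rk)
      (Set.Icc ((proj (facets n rk) S F : ExtFace _) : WithTop (ExtFace (facets n rk))) ⊤) := by
  classical
  set R := FlagStep (extRank n rk)
    (Set.Icc ((proj (facets n rk) S F : ExtFace _) : WithTop (ExtFace (facets n rk))) ⊤) with hR
  have hsame : ∀ T, (∀ a ∈ facets n rk, ¬ F ≤ a → (a ∈ S ↔ a ∈ T)) → ∀ c d,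
      IsMaxChainIn (Set.Icc F t) c → IsMaxChainIn (Set.Icc F t) d →
      Relation.ReflTransGen R (liftChain _ T c) (liftChain _ T d) := by
    intro T hST c d hc hd
    exact Relation.ReflTransGen.lift (liftChain (facets n rk) T)
      (fun a b ⟨ha, hb, j, hj⟩ => ⟨ha.liftChain ht hST, hb.liftChain ht hST, j, hj.liftChain T⟩) _ _
      (flagConnected_Icc hK (ht F) c d hc hd)
  have hdiff : ∀ V : Finset K, (∀ a ∈ V, a ∈ facets n rk ∧ F ≤ a) → ∀ T,
      (∀ a ∈ facets n rk, ¬ F ≤ a → (a ∈ S ↔ a ∈ T)) → ∀ c d,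
      IsMaxChainIn (Set.Icc F t) c → IsMaxChainIn (Set.Icc F t) d →
      Relation.ReflTransGen R (liftChain _ T c) (liftChain _ (symmDiff T V) d) := by
    intro V
    induction V using Finset.induction_on with
    | empty =>
      intro _ T hST c d hc hd
      rw [← Finset.bot_eq_empty, symmDiff_bot]
      exact hsame T hST c d hc hd
    | insert a V haV ih =>
      intro hV T hST c d hc hd
      obtain ⟨haA, hFa⟩ := hV a (Finset.mem_insert_self a V)
      obtain ⟨e, he, hae⟩ := exists_isMaxChainIn_mem (s := Set.Icc F t) ⟨hFa, ht a⟩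
      have hVV : ∀ b ∈ V, b ∈ facets n rk ∧ F ≤ b := fun b hb =>
        hV b (Finset.mem_insert_of_mem hb)
      have hST' : ∀ b ∈ facets n rk, ¬ F ≤ b → (b ∈ S ↔ b ∈ symmDiff T V) := by
        intro b hb hFb
        have : b ∉ V := fun h => hFb (hVV b h).2
        rw [hST b hb hFb]
        simp [Finset.mem_symmDiff, this]
      have hST'' : ∀ b ∈ facets n rk, ¬ F ≤ b → (b ∈ S ↔ b ∈ symmDiff (symmDiff T V) {a}) := by
        intro b hb hFb
        have : b ≠ a := by rintro rfl; exact hFb hFa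
        rw [hST' b hb hFb, Finset.mem_symmDiff (t := {a})]
        simp [this]
      have hins : symmDiff T (insert a V) = symmDiff (symmDiff T V) {a} := by
        ext b
        simp only [Finset.mem_symmDiff, Finset.mem_insert, Finset.mem_singleton]
        by_cases hb : b = a
        · subst hb; tauto
        · tauto
      rw [hins]
      refine ((ih hVV T hST c e hc he).tail ?_).trans (hsame _ hST'' e d he hd)
      exact ⟨he.liftChain ht hST', he.liftChain ht hST'', n,
        setAdj_liftChain_symmDiff hK ht he hae haA _⟩
  intro c d hc hd
  obtain ⟨T, c, hTA, hST, hc', rfl⟩ := exists_eq_liftChain hK ht hc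
  obtain ⟨U, d, hUA, hSU, hd', rfl⟩ := exists_eq_liftChain hK ht hd
  have := hdiff (symmDiff T U) (fun a ha => ?_) T hST c d hc' hd'
  · rwa [symmDiff_symmDiff_cancel_left] at this
  · have haA : a ∈ facets n rk := by
      rcases Finset.mem_symmDiff.1 ha with h | h
      · exact hTA a h.1
      · exact hUA a h.1
    refine ⟨haA, ?_⟩
    by_contra hFa
    have h1 := hST a haA hFa
    have h2 := hSU a haA hFa
    rw [Finset.mem_symmDiff] at ha
    tauto

theorem isAbstractPolytope_ext (hK : IsAbstractPolytope n rk) :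
    IsAbstractPolytope (n + 1) (extRank (A := facets n rk) n rk) := by
  classical
  obtain ⟨b, hb⟩ := hK.exists_bot
  obtain ⟨t, ht⟩ := hK.exists_top
  have hnn := hK.neg_one_le
  have face_lt : ∀ {x y : ExtFace (facets n rk)}, x < y → x.face < y.face := by
    intro x y h
    refine lt_of_le_of_ne h.le.1 fun heq => h.not_ge ?_
    exact ⟨heq.ge, fun a ha => (h.le.2 a (heq ▸ ha)).symm⟩
  refine ⟨by lia, ?_, ?_, ⟨WithTop.some (proj _ ∅ b), ?_⟩, ⟨⊤, fun _ => le_top⟩, ?_, ?_⟩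
  · intro x y h
    induction y using WithTop.recTopCoe with
    | top =>
      induction x using WithTop.recTopCoe with
      | top => simp at h
      | coe x =>
        have := (rank_mem hK x.face).2
        rw [extRank_coe, extRank_top]
        lia
    | coe y =>
      induction x using WithTop.recTopCoe with
      | top => simp at h
      | coe x => exact hK.strictMono (face_lt (WithTop.coe_lt_coe.1 h))
  · ext i
    constructor
    · rintro ⟨x, rfl⟩
      induction x using WithTop.recTopCoe with
      | top => exact ⟨by rw [extRank_top]; lia, le_rfl⟩
      | coe x =>
        have := rank_mem hK x.face
        exact ⟨this.1, by rw [extRank_coe]; lia⟩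
    · rintro ⟨h1, h2⟩
      rcases h2.eq_or_lt with rfl | h2
      · exact ⟨⊤, rfl⟩
      · have : i ∈ Set.range rk := by rw [hK.rank_range]; exact ⟨h1, by lia⟩
        obtain ⟨F, rfl⟩ := this
        exact ⟨WithTop.some (proj _ ∅ F), rfl⟩
  · intro x
    induction x using WithTop.recTopCoe with
    | top => exact le_top
    | coe x =>
      rw [WithTop.coe_le_coe, ← proj_supp_face x]
      exact proj_le_proj.2 ⟨hb _, fun a _ h => absurd (hb a) h⟩
  · intro x y hxy hr
    induction x using WithTop.recTopCoe with
    | top => simp at hxy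
    | coe x =>
    induction y using WithTop.recTopCoe with
    | top =>
      simp only [extRank_coe, extRank_top] at hr
      have hxA : x.face ∈ facets n rk := by change rk x.face = n - 1; lia
      have hxt : ¬ t ≤ x.face := fun h => by
        have := rank_mono hK h
        have := rank_top hK ht
        lia
      have hxeq : ∀ a ∈ facets n rk, (x.face ≤ a ↔ a = x.face) := fun a ha =>
        ⟨fun h => (eq_of_le_of_rank_eq hK h (hxA.trans ha.symm)).symm, fun h => h.ge⟩
      refine ⟨WithTop.some (proj _ x.supp t),
        WithTop.some (proj _ (symmDiff x.supp {x.face}) t), ?_, ?_⟩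
      · intro h
        have := (proj_eq_proj.1 (WithTop.coe_injective h)).2 x.face hxA hxt
        simp only [Finset.mem_symmDiff, Finset.mem_singleton] at this
        tauto
      · intro z
        induction z using WithTop.recTopCoe with
        | top => simp
        | coe z =>
          rw [WithTop.coe_lt_coe, WithTop.coe_inj, WithTop.coe_inj]
          constructor
          · rintro ⟨h, -⟩
            have hzt : z.face = t := by
              refine eq_top_of_rank_eq hK ht ?_
              have := hK.strictMono (face_lt h)
              have := (rank_mem hK z.face).2
              lia
            have hle := h.le
            rw [← proj_supp_face x, ← proj_supp_face z] at hle
            have hsupp := (proj_le_proj.1 hle).2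
            rw [← proj_supp_face z, proj_eq_proj, proj_eq_proj, hzt]
            by_cases hmem : x.face ∈ z.supp ↔ x.face ∈ x.supp
            · refine Or.inl ⟨rfl, fun a ha _ => ?_⟩
              by_cases hax : a = x.face
              · rw [hax, hmem]
              · exact (hsupp a ha ((hxeq a ha).not.2 hax)).symm
            · refine Or.inr ⟨rfl, fun a ha _ => ?_⟩
              rw [Finset.mem_symmDiff, Finset.mem_singleton]
              by_cases hax : a = x.face
              · subst hax
                tauto
              · have := hsupp a ha ((hxeq a ha).not.2 hax)
                tauto
          · have hlt : ∀ V : Finset K, (∀ a ∈ facets n rk, ¬ x.face ≤ a → (a ∈ x.supp ↔ a ∈ V)) →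
                x < proj (facets n rk) V t := by
              intro V hV
              refine lt_of_le_of_ne ?_ fun h => hxt (by rw [h]; rfl)
              conv_lhs => rw [← proj_supp_face x]
              exact proj_le_proj.2 ⟨ht _, hV⟩
            rintro (rfl | rfl)
            · exact ⟨hlt _ fun _ _ _ => Iff.rfl, WithTop.coe_lt_top _⟩
            · refine ⟨hlt _ fun a ha hxa => ?_, WithTop.coe_lt_top _⟩
              have : a ≠ x.face := (hxeq a ha).not.1 hxa
              simp [Finset.mem_symmDiff, this]
    | coe y =>
      rw [WithTop.coe_lt_coe] at hxy
      obtain ⟨H₁, H₂, hne, hH⟩ := hK.diamond x.face y.face (face_lt hxy) hr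
      have hx : x = proj _ y.supp x.face := by
        have := hxy.le
        rw [← proj_supp_face y] at this
        exact eq_proj_of_le_proj this
      have hlt : ∀ F G, proj (facets n rk) y.supp F < proj (facets n rk) y.supp G ↔ F < G := by
        intro F G
        simp only [lt_iff_le_not_ge, proj_le_proj_same]
      refine ⟨WithTop.some (proj _ y.supp H₁),
        WithTop.some (proj _ y.supp H₂), ?_, ?_⟩
      · exact fun h => hne (proj_eq_proj.1 (WithTop.coe_injective h)).1
      · intro z
        induction z using WithTop.recTopCoe with
        | top => simp
        | coe z =>
          rw [WithTop.coe_lt_coe, WithTop.coe_lt_coe, WithTop.coe_inj, WithTop.coe_inj]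
          constructor
          · rintro ⟨h1, h2⟩
            have hz : z = proj _ y.supp z.face := by
              have := h2.le
              rw [← proj_supp_face y] at this
              exact eq_proj_of_le_proj this
            rcases (hH z.face).1 ⟨face_lt h1, face_lt h2⟩ with h | h
            · exact Or.inl (h ▸ hz)
            · exact Or.inr (h ▸ hz)
          · have hback : ∀ H, x.face < H ∧ H < y.face →
                x < proj _ y.supp H ∧ proj _ y.supp H < y := by
              rintro H ⟨h1, h2⟩
              refine ⟨?_, ?_⟩
              · rw [hx]; exact (hlt _ _).2 h1
              · conv_rhs => rw [← proj_supp_face y]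
                exact (hlt _ _).2 h2
            rintro (rfl | rfl)
            · exact hback _ ((hH _).2 (Or.inl rfl))
            · exact hback _ ((hH _).2 (Or.inr rfl))
  · intro x y hxy
    refine flagConnected_iff.1 ?_
    induction y using WithTop.recTopCoe with
    | top =>
      induction x using WithTop.recTopCoe with
      | top =>
        intro c d hc hd
        rw [Set.Icc_self] at hc hd
        have heq : ∀ {e}, IsMaxChainIn {(⊤ : WithTop (ExtFace (facets n rk)))} e → e = {⊤} :=
          fun he => he.1.antisymm (by
            rintro _ rfl
            exact he.2.2 _ rfl fun _ _ => Or.inr le_top)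
        rw [heq hc, heq hd]
      | coe x =>
        rw [← proj_supp_face x]
        exact flagConnected_Icc_top hK ht _ _
    | coe y =>
      induction x using WithTop.recTopCoe with
      | top => simp at hxy
      | coe x =>
        rw [WithTop.coe_le_coe] at hxy
        have hx : x = proj _ y.supp x.face := by
          rw [← proj_supp_face y] at hxy
          exact eq_proj_of_le_proj hxy
        have := flagConnected_Icc_proj (n := n) (A := facets n rk) (T := y.supp)
          (flagConnected_Icc hK hxy.1)
        rwa [← hx, proj_supp_face] at this

end ExtensionPolytope

section Automorphisms

open ExtFace

variable {K : Type*} [PartialOrder K] {n : ℤ} {rk : K → ℤ} (hK : IsAbstractPolytope n rk)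
include hK

theorem apply_mem_facets (g : K ≃o K) (a : K) : g a ∈ facets n rk ↔ a ∈ facets n rk := by
  simp only [facets, Set.mem_ofPred_eq, rank_apply hK]

theorem isMaxChainIn_univ_liftChain {c : Set K} (hc : IsMaxChainIn Set.univ c) (T : Finset K) :
    IsMaxChainIn Set.univ (liftChain (facets n rk) T c) := by
  obtain ⟨t, ht⟩ := hK.exists_top
  obtain ⟨b, hb⟩ := hK.exists_bot
  have hc' : IsMaxChainIn (Set.Icc b t) c :=
    ⟨fun x _ => ⟨hb x, ht x⟩, hc.2.1, fun z _ => hc.2.2 z trivial⟩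
  have h := hc'.liftChain (A := facets n rk) (S := T) (T := T) ht fun _ _ _ => Iff.rfl
  refine ⟨Set.subset_univ _, h.2.1, fun z _ => h.2.2 z ⟨?_, le_top⟩⟩
  induction z using WithTop.recTopCoe with
  | top => exact le_top
  | coe x =>
    rw [WithTop.coe_le_coe, ← proj_supp_face x]
    exact proj_le_proj.2 ⟨hb _, fun a _ h => absurd (hb a) h⟩

theorem exists_eq_liftChain_univ {d : Set (WithTop (ExtFace (facets n rk)))}
    (hd : IsMaxChainIn Set.univ d) : ∃ T c, (∀ a ∈ T, a ∈ facets n rk) ∧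
      IsMaxChainIn Set.univ c ∧ d = liftChain (facets n rk) T c := by
  obtain ⟨t, ht⟩ := hK.exists_top
  obtain ⟨b, hb⟩ := hK.exists_bot
  have hbot : ∀ z : WithTop (ExtFace (facets n rk)), WithTop.some (proj _ ∅ b) ≤ z := by
    intro z
    induction z using WithTop.recTopCoe with
    | top => exact le_top
    | coe x =>
      refine WithTop.coe_le_coe.2 ?_
      rw [← proj_supp_face x]
      exact proj_le_proj.2 ⟨hb _, fun a _ h => absurd (hb a) h⟩
  obtain ⟨T, c, hT, -, hc, rfl⟩ := exists_eq_liftChain hK ht (S := ∅) (F := b) (d := d)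
    ⟨fun x _ => ⟨hbot x, le_top⟩, hd.2.1, fun z _ => hd.2.2 z trivial⟩
  exact ⟨T, c, hT, ⟨Set.subset_univ _, hc.2.1, fun z _ => hc.2.2 z ⟨hb z, ht z⟩⟩, rfl⟩

theorem exists_shift_mul_liftHom_image_eq (hreg : IsRegularPolytope (P := K))
    {c d : Set (WithTop (ExtFace (facets n rk)))} (hc : IsMaxChainIn Set.univ c)
    (hd : IsMaxChainIn Set.univ d) :
    ∃ (T : Finset K) (g : K ≃o K), (∀ a ∈ T, a ∈ facets n rk) ∧
      ⇑(shift T * liftHom (apply_mem_facets hK) g :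
        WithTop (ExtFace (facets n rk)) ≃o WithTop (ExtFace (facets n rk))) '' c = d := by
  classical
  obtain ⟨T, c, hT, hc', rfl⟩ := exists_eq_liftChain_univ hK hc
  obtain ⟨U, d, hU, hd', rfl⟩ := exists_eq_liftChain_univ hK hd
  obtain ⟨c, rfl⟩ := hc'.exists_flag
  obtain ⟨d, rfl⟩ := hd'.exists_flag
  obtain ⟨g, hg⟩ := hreg c d
  refine ⟨symmDiff (T.map g.toEquiv.toEmbedding) U, g, fun a ha => ?_, ?_⟩
  · rcases Finset.mem_symmDiff.1 ha with h | h
    · obtain ⟨b, hb, rfl⟩ := Finset.mem_map.1 h.1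
      exact (apply_mem_facets hK g b).2 (hT b hb)
    · exact hU a h.1
  · rw [RelIso.coe_mul, Set.image_comp, liftHom_image_liftChain, shift_image_liftChain,
      symmDiff_symmDiff_cancel_left, hg]

theorem isRegularPolytope_ext (hreg : IsRegularPolytope (P := K)) :
    IsRegularPolytope (P := WithTop (ExtFace (facets n rk))) := by
  intro c d
  obtain ⟨T, g, -, h⟩ := exists_shift_mul_liftHom_image_eq hK hreg (Flag.isMaxChainIn_univ c)
    (Flag.isMaxChainIn_univ d)
  exact ⟨_, h⟩

theorem nonempty_Iic_orderIso (F : WithTop (ExtFace (facets n rk))) (hF : extRank n rk F = n) :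
    Nonempty (Set.Iic F ≃o K) := by
  obtain ⟨t, ht⟩ := hK.exists_top
  induction F using WithTop.recTopCoe with
  | top => simp at hF
  | coe x =>
    have hxt : x.face = t := eq_top_of_rank_eq hK ht hF
    have hx : x = proj _ x.supp t := by
      rw [← hxt, proj_supp_face]
    let f : K ↪o Set.Iic (x : WithTop (ExtFace (facets n rk))) :=
      OrderEmbedding.ofMapLEIff (fun H => ⟨WithTop.some (proj _ x.supp H), by
        refine WithTop.coe_le_coe.2 ?_
        conv_rhs => rw [hx]
        exact proj_le_proj_same.2 (ht H)⟩) fun H H' => by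
        refine WithTop.coe_le_coe.trans ?_
        exact proj_le_proj_same
    refine ⟨(RelIso.ofSurjective f ?_).symm⟩
    rintro ⟨z, hz⟩
    induction z using WithTop.recTopCoe with
    | top => exact absurd hz (by simp)
    | coe y =>
      refine ⟨y.face, Subtype.ext (congrArg WithTop.some (eq_proj_of_le_proj (G := t) ?_).symm)⟩
      rw [← hx]
      exact WithTop.coe_le_coe.1 hz

theorem bijective_shift_mul_liftHom (hreg : IsRegularPolytope (P := K)) :
    Function.Bijective fun p : {T : Finset K // ∀ a ∈ T, a ∈ facets n rk} × (K ≃o K) =>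
      (shift p.1.1 * liftHom (apply_mem_facets hK) p.2 :
        WithTop (ExtFace (facets n rk)) ≃o WithTop (ExtFace (facets n rk))) := by
  classical
  obtain ⟨t, ht⟩ := hK.exists_top
  constructor
  · rintro ⟨⟨T, hT⟩, g⟩ ⟨⟨U, hU⟩, h⟩ heq
    have key : ∀ F, proj (facets n rk) T (g F) = proj _ U (h F) := by
      intro F
      have := congrArg (fun e => e (WithTop.some (proj (facets n rk) ∅ F))) heq
      simp only [RelIso.mul_apply] at this
      rw [liftHom_coe_proj, liftHom_coe_proj, shift_coe_proj, shift_coe_proj, Finset.map_empty,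
        Finset.map_empty, ← Finset.bot_eq_empty, bot_symmDiff, bot_symmDiff] at this
      exact WithTop.coe_injective this
    have hgh : g = h := by
      ext F
      exact (proj_eq_proj.1 (key F)).1
    have hTU : T = U := by
      obtain ⟨-, h2⟩ := proj_eq_proj.1 (key (g.symm t))
      rw [g.apply_symm_apply] at h2
      have hnle : ∀ a ∈ facets n rk, ¬ t ≤ a := fun a ha hta => by
        have := rank_mono hK hta
        have := rank_top hK ht
        have : rk a = n - 1 := ha
        lia
      ext a
      exact ⟨fun ha => (h2 a (hT a ha) (hnle a (hT a ha))).1 ha,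
        fun ha => (h2 a (hU a ha) (hnle a (hU a ha))).2 ha⟩
    subst hgh hTU
    rfl
  · intro e
    obtain ⟨c, hc, -⟩ := exists_isMaxChainIn_mem
      (Set.mem_univ (⊤ : WithTop (ExtFace (facets n rk))))
    obtain ⟨T, g, hT, h⟩ := exists_shift_mul_liftHom_image_eq hK hreg hc (hc.image_orderIso e)
    refine ⟨⟨⟨T, hT⟩, g⟩, ?_⟩
    have := eq_one_of_image_eq (isAbstractPolytope_ext hK) hc
      (e⁻¹ * (shift T * liftHom (apply_mem_facets hK) g)) (by
        rw [RelIso.coe_mul, Set.image_comp, h, ← Set.image_comp, ← RelIso.coe_mul, inv_mul_cancel,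
          RelIso.coe_one, Set.image_id])
    exact (inv_mul_eq_one.1 this).symm

theorem card_ext_automorphisms [Finite K] (hreg : IsRegularPolytope (P := K)) :
    Nat.card (WithTop (ExtFace (facets n rk)) ≃o WithTop (ExtFace (facets n rk))) =
      Nat.card (K ≃o K) * 2 ^ Nat.card {F : K // rk F = n - 1} := by
  classical
  have := Fintype.ofFinite {F : K // rk F = n - 1}
  rw [← Nat.card_congr (Equiv.ofBijective _ (bijective_shift_mul_liftHom hK hreg)), Nat.card_prod,
    mul_comm]
  congr 1
  refine (Nat.card_congr (Equiv.finsetSubtypeComm fun F : K => rk F = n - 1)).symm.trans ?_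
  rw [Nat.card_eq_fintype_card, Fintype.card_finset, Nat.card_eq_fintype_card]

omit hK in
theorem finite_ext_iff {A : Set K} : Finite (WithTop (ExtFace A)) ↔ Finite K := by
  constructor
  · intro _
    refine Finite.of_injective (fun F => WithTop.some (proj A ∅ F)) fun F G h => ?_
    exact (proj_eq_proj.1 (WithTop.coe_injective h)).1
  · intro _
    have : Finite (ExtFace A) := Finite.of_injective (fun x => (x.face, x.supp)) fun x y h =>
      ExtFace.ext (congrArg Prod.fst h) (congrArg Prod.snd h)
    exact inferInstanceAs (Finite (Option (ExtFace A)))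

/-- If an involution `g` moves the facet `a`, then the product of `g` with the translation in the
coordinate `a` has order `4`. -/
theorem orderOf_liftHom_mul_shift {g : K ≃o K} {a : K} (hg : g * g = 1) (ha : a ∈ facets n rk)
    (hga : g a ≠ a) :
    orderOf (liftHom (apply_mem_facets hK) g * shift {a}) = 4 := by
  classical
  obtain ⟨t, ht⟩ := hK.exists_top
  have hsq : (liftHom (apply_mem_facets hK) g * shift {a}) ^ 2 = shift (symmDiff {g a} {a}) := by
    have hmap : ({a} : Finset K).map g.toEquiv.toEmbedding = {g a} := Finset.map_singleton _ _
    rw [pow_two]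
    nth_rw 1 [liftHom_mul_shift]
    rw [mul_assoc, ← mul_assoc (liftHom (apply_mem_facets hK) g) (liftHom (apply_mem_facets hK) g),
      ← map_mul, hg, map_one, one_mul, shift_mul_shift, hmap]
  refine orderOf_eq_prime_pow (p := 2) (n := 1) ?_ ?_
  · rw [pow_one, hsq]
    intro h
    have := congrArg (fun e => e (WithTop.some (proj (facets n rk) ∅ t))) h
    simp only [RelIso.one_apply] at this
    rw [shift_coe_proj] at this
    have := (proj_eq_proj.1 (WithTop.coe_injective this)).2 a ha fun hta => by
      have := rank_mono hK hta
      have := rank_top hK ht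
      have : rk a = n - 1 := ha
      lia
    simp [Finset.mem_symmDiff, hga.symm] at this
  · rw [show 2 ^ (1 + 1) = 2 * 2 from rfl, pow_mul, hsq, pow_two, shift_mul_shift, symmDiff_self,
      Finset.bot_eq_empty, shift_empty]

end Automorphisms

end PolytopeExtension

open PolytopeExtension in
/-- **Lemma 2K.**  Let `K` be a regular `m`-polytope with distinguished generators
`ρ_0, ..., ρ_{m-1}` (w.r.t. a base flag `Φ`), Schläfli type `{p_1, ..., p_{m-1}}`
(where `p_j = orderOf (ρ_{j-1} ρ_j)`), and facet set `A` (the faces of rank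
`m-1`).  Then there is a regular `(m+1)`-polytope `K̄` of Schläfli type
`{p_1, ..., p_{m-1}, 4}`, whose facets (sections below the faces of rank `m`) are
isomorphic to `K`, with `|Γ(K̄)| = |Γ(K)| · 2^{|A|}` when `K` is finite; moreover
`K̄` is finite if and only if `K` is finite. -/
theorem regular_polytope_extension {m : ℕ} (hm : 1 ≤ m) {K : Type} [PartialOrder K]
    (rkK : K → ℤ) (hK : IsAbstractPolytope (m : ℤ) rkK)
    (hKreg : IsRegularPolytope (P := K))
    (Φ : Flag K) (ρ : Fin m → (K ≃o K))
    (hρ : ∀ j : Fin m, ∃ Ψ : Flag K,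
      (↑Ψ : Set K) = (ρ j) '' (↑Φ : Set K) ∧ IsPolytopeAdj rkK (j : ℤ) Φ Ψ) :
    ∃ Kb : BundledPolytope ((m : ℤ) + 1), IsRegularPolytope (P := Kb.carrier) ∧
      -- the facets of `K̄` are isomorphic to `K`
      (∀ F : Kb.carrier, Kb.rk F = (m : ℤ) → Nonempty (↥(Set.Iic F) ≃o K)) ∧
      -- Schläfli type `{p_1, ..., p_{m-1}, 4}`
      (∃ (Φb : Flag Kb.carrier) (ρb : Fin (m + 1) → (Kb.carrier ≃o Kb.carrier)),
        (∀ j : Fin (m + 1), ∃ Ψ : Flag Kb.carrier,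
          (↑Ψ : Set Kb.carrier) = (ρb j) '' (↑Φb : Set Kb.carrier) ∧
            IsPolytopeAdj Kb.rk (j : ℤ) Φb Ψ) ∧
        (∀ j : ℕ, (h1 : 1 ≤ j) → (h2 : j ≤ m - 1) →
          orderOf (ρb ⟨j - 1, by omega⟩ * ρb ⟨j, by omega⟩)
            = orderOf (ρ ⟨j - 1, by omega⟩ * ρ ⟨j, by omega⟩)) ∧
        orderOf (ρb ⟨m - 1, by omega⟩ * ρb ⟨m, by omega⟩) = 4) ∧
      -- order of the automorphism group when `K` is finite
      (Finite K → Nat.card (Kb.carrier ≃o Kb.carrier)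
        = Nat.card (K ≃o K) * 2 ^ Nat.card {F : K // rkK F = (m : ℤ) - 1}) ∧
      -- `K̄` is finite if and only if `K` is finite
      (Finite Kb.carrier ↔ Finite K) := by
  classical
  have hmax := Flag.isMaxChainIn_univ Φ
  have hadj : ∀ j : Fin m, SetAdj rkK (j : ℤ) (Φ : Set K) (ρ j '' (Φ : Set K)) := by
    intro j
    obtain ⟨Ψ, hΨ, hne, hj⟩ := hρ j
    rw [← hΨ]
    exact ⟨fun h => hne (Flag.ext h), hj⟩
  obtain ⟨a, haΦ, ha⟩ := exists_mem_rank_eq hK hmax (i := (m : ℤ) - 1) (by lia) (by lia)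
  obtain ⟨t, ht⟩ := hK.exists_top
  obtain ⟨b, hb⟩ := hK.exists_bot
  have hΦ : IsMaxChainIn (Set.Icc b t) (Φ : Set K) :=
    ⟨fun x _ => ⟨hb x, ht x⟩, hmax.2.1, fun z _ => hmax.2.2 z trivial⟩
  obtain ⟨Φb, hΦb⟩ := (isMaxChainIn_univ_liftChain hK hmax ∅).exists_flag
  let L := liftHom (apply_mem_facets hK)
  let ρb : Fin (m + 1) → (WithTop (ExtFace (facets (m : ℤ) rkK)) ≃o _) :=
    Fin.snoc (fun j => L (ρ j)) (shift {a})
  have hρb : ∀ (j : ℕ) (h : j < m), ρb ⟨j, by omega⟩ = L (ρ ⟨j, h⟩) := fun j h =>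
    Fin.snoc_castSucc (α := fun _ => WithTop (ExtFace (facets (m : ℤ) rkK)) ≃o _) _ _ ⟨j, h⟩
  have hρbm : ρb ⟨m, by omega⟩ = shift {a} :=
    Fin.snoc_last (α := fun _ => WithTop (ExtFace (facets (m : ℤ) rkK)) ≃o _) _ _
  refine ⟨⟨WithTop (ExtFace (facets (m : ℤ) rkK)), extRank m rkK, isAbstractPolytope_ext hK⟩,
    isRegularPolytope_ext hK hKreg, nonempty_Iic_orderIso hK, ⟨Φb, ρb, ?_, ?_, ?_⟩,
    fun _ => card_ext_automorphisms hK hKreg, finite_ext_iff⟩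
  · intro j
    have hadjb : SetAdj (extRank (m : ℤ) rkK) (j : ℤ) (Φb : Set _) (ρb j '' (Φb : Set _)) := by
      rw [hΦb]
      obtain ⟨j, hj⟩ := j
      rcases Nat.lt_succ_iff_lt_or_eq.1 hj with h | rfl
      · rw [hρb j h, liftHom_image_liftChain, Finset.map_empty]
        exact (hadj ⟨j, h⟩).liftChain ∅
      · rw [hρbm, shift_image_liftChain]
        exact setAdj_liftChain_symmDiff hK ht hΦ haΦ ha ∅
    obtain ⟨Ψ, hΨ⟩ := ((Flag.isMaxChainIn_univ Φb).image_orderIso (ρb j)).exists_flag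
    rw [← hΨ] at hadjb
    exact ⟨Ψ, hΨ, fun h => hadjb.1 (congrArg _ h), hadjb.2⟩
  · intro j h1 h2
    rw [hρb (j - 1) (by omega), hρb j (by omega), ← map_mul]
    exact orderOf_injective L (liftHom_injective _) _
  · rw [hρb (m - 1) (by omega), hρbm]
    have h := hadj ⟨m - 1, by omega⟩
    refine orderOf_liftHom_mul_shift hK (mul_self_eq_one_of_setAdj hK hmax h) ha fun hfix => ?_
    have hcast : rkK a = ((m - 1 : ℕ) : ℤ) := by rw [ha]; lia
    exact SetAdj.notMem hK hmax (hmax.image_orderIso _) h ⟨a, haΦ, hfix⟩ hcast haΦ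
end

section
/- Let m ≥ 1 and let Γ be a string C-group of rank m with distinguished generators ρ_0, ..., ρ_{m-1}, each of order exactly 2. Suppose Γ acts transitively on a nonempty set A, and a ∈ A is a point whose stabilizer in Γ is exactly the subgroup ⟨ρ_0, ..., ρ_{m-2}⟩. Let N be the group of finitely supported functions A → ℤ/2ℤ under pointwise addition, with Γ acting on N by permuting coordinates via its action on A, and let S = N ⋊ Γ be the semidirect product. Let s_i = (0, ρ_i) for 0 ≤ i ≤ m-1 and let s_m = (δ_a, 1), where δ_a is the indicator function of a. Then: (i) S is generated by s_0, ..., s_m, and each s_i has order 2; (ii) S with these m+1 generators is a string C-group of rank m+1; (iii) the subgroup ⟨s_0, ..., s_{m-1}⟩ equals {0} ⋊ Γ and is isomorphic to Γ via a map sending s_i to ρ_i; (iv) for 1 ≤ j ≤ m-1 the order of s_{j-1} s_j equals the order of ρ_{j-1} ρ_j, and s_{m-1} s_m has order 4; (v) if Γ and A are finite, then |S| = |Γ| · 2^{|A|}. -/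
/-- A string group generated by involutions (sggi): the group is generated by
`g 0, ..., g (n-1)`, each `g i` squares to the identity, and
`(g i * g j)^2 = 1` whenever `|i - j| > 1`. -/
def IsSggi {G : Type*} [Group G] {n : ℕ} (g : Fin n → G) : Prop :=
  Subgroup.closure (Set.range g) = ⊤ ∧ (∀ i, g i ^ 2 = 1) ∧
    ∀ i j : Fin n, 1 < |(i : ℤ) - (j : ℤ)| → (g i * g j) ^ 2 = 1

/-- A string C-group: an sggi whose generators have order exactly `2` and which
satisfies the intersection condition. -/
def IsStringCGroup {G : Type*} [Group G] {n : ℕ} (g : Fin n → G) : Prop :=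
  IsSggi g ∧ (∀ i, orderOf (g i) = 2) ∧
    ∀ I J : Set (Fin n),
      Subgroup.closure (g '' I) ⊓ Subgroup.closure (g '' J)
        = Subgroup.closure (g '' (I ∩ J))

/-- `H` (generated by `h 0, ..., h (k-1)`) covers the sggi `⟨g 0, ..., g (k-1)⟩`:
there is a homomorphism sending each `h t` to `g t` whose range is exactly the
subgroup generated by the `g t`, i.e. an epimorphism of sggi's. -/
def SggiCovers {H G : Type*} [Group H] [Group G] {k : ℕ}
    (h : Fin k → H) (g : Fin k → G) : Prop :=
  ∃ φ : H →* G, (∀ t, φ (h t) = g t) ∧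
    φ.range = Subgroup.closure (Set.range g)

/-- The sggi `⟨h 0, ..., h (k-1)⟩` is isomorphic to the sggi
`⟨g 0, ..., g (k-1)⟩` via a map sending each `h t` to `g t`: there is an
injective homomorphism on the subgroup generated by the `h t` sending each `h t`
to `g t` (its range is then automatically the subgroup generated by the `g t`). -/
def SggiIsoVia {H G : Type*} [Group H] [Group G] {k : ℕ}
    (h : Fin k → H) (g : Fin k → G) : Prop :=
  ∃ φ : ↥(Subgroup.closure (Set.range h)) →* G,
    Function.Injective φ ∧
    ∀ t, φ ⟨h t, Subgroup.subset_closure (Set.mem_range_self t)⟩ = g t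

/-- A group bundled with its carrier. -/
structure BundledGroup where
  carrier : Type
  [grp : Group carrier]

attribute [instance] BundledGroup.grp

open MulAction

/-- In an sggi, generators whose indices differ by more than one commute. -/
lemma IsSggi.commute {G : Type*} [Group G] {n : ℕ} {g : Fin n → G} (hg : IsSggi g)
    {i j : Fin n} (hij : (i : ℕ) + 1 < j) : Commute (g i) (g j) := by
  have inv_eq : ∀ k, (g k)⁻¹ = g k := fun k =>
    inv_eq_of_mul_eq_one_left (by rw [← sq]; exact hg.2.1 k)
  have h := hg.2.2 i j (by rw [abs_sub_comm, lt_abs]; left; omega)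
  have h' : g i * g j = (g i * g j)⁻¹ := eq_inv_of_mul_eq_one_left (by rw [← sq]; exact h)
  rwa [mul_inv_rev, inv_eq, inv_eq] at h'

/-- The indices of `I` above which `I` has no gap. -/
def finalRun {n : ℕ} (I : Set (Fin n)) : Set (Fin n) :=
  {i | ∀ j, i ≤ j → j ∈ I}

lemma finalRun_subset {n : ℕ} (I : Set (Fin n)) : finalRun I ⊆ I :=
  fun i hi => hi i le_rfl

lemma finalRun_total {n : ℕ} (I J : Set (Fin n)) :
    finalRun I ⊆ finalRun J ∨ finalRun J ⊆ finalRun I := by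
  by_contra! h
  obtain ⟨⟨i, hiI, hiJ⟩, ⟨j, hjJ, hjI⟩⟩ := And.imp Set.not_subset.1 Set.not_subset.1 h
  rcases le_total i j with hij | hij
  · exact hjI fun k hk => hiI k (hij.trans hk)
  · exact hiJ fun k hk => hjJ k (hij.trans hk)

section Orbits

variable {n : ℕ} {G A : Type*} [Group G] [MulAction G A] {g : Fin n → G} {a : A}

/-- If all generators but the last fix `a`, the orbit of `a` under a standard subgroup only
depends on the final run of its index set. -/
lemma exists_mem_closure_finalRun (hg : IsSggi g)
    (hfix : ∀ i : Fin n, (i : ℕ) + 1 < n → g i • a = a) (I : Set (Fin n)) {γ : G}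
    (hγ : γ ∈ Subgroup.closure (g '' I)) :
    ∃ κ ∈ Subgroup.closure (g '' finalRun I), κ • a = γ • a := by
  have gen : ∀ i ∈ I, ∀ y : G,
      (∃ κ ∈ Subgroup.closure (g '' finalRun I), κ • a = y • a) →
      ∃ κ ∈ Subgroup.closure (g '' finalRun I), κ • a = (g i * y) • a := by
    rintro i hi y ⟨κ, hκ, hκa⟩
    by_cases hir : i ∈ finalRun I
    · exact ⟨g i * κ, mul_mem (Subgroup.subset_closure ⟨i, hir, rfl⟩) hκ, by
        rw [mul_smul, mul_smul, hκa]⟩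
    · obtain ⟨j, hij, hj⟩ : ∃ j, i ≤ j ∧ j ∉ I := by
        simpa [finalRun] using hir
      have hlt : i < j := lt_of_le_of_ne hij (by rintro rfl; exact hj hi)
      have hcomm : Commute (g i) κ := by
        have : Subgroup.closure (g '' finalRun I) ≤ Subgroup.centralizer {g i} := by
          rw [Subgroup.closure_le]
          rintro _ ⟨t, ht, rfl⟩
          have hjt : j < t := lt_of_not_ge fun h => hj (ht j h)
          refine Subgroup.mem_centralizer_singleton_iff.2 ?_
          exact (hg.commute (by rw [Fin.lt_def] at hlt hjt; omega)).eq.symm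
        exact (Subgroup.mem_centralizer_singleton_iff.1 (this hκ)).symm
      refine ⟨κ, hκ, ?_⟩
      rw [mul_smul, ← hκa, ← mul_smul, hcomm.eq, mul_smul, hfix i (by
        rw [Fin.lt_def] at hlt; omega)]
  induction hγ using Subgroup.closure_induction_left with
  | one => exact ⟨1, one_mem _, rfl⟩
  | mul_left x hx y _ ih =>
    obtain ⟨i, hi, rfl⟩ := hx
    exact gen i hi y ih
  | inv_mul_cancel x hx y _ ih =>
    obtain ⟨i, hi, rfl⟩ := hx
    rw [inv_eq_of_mul_eq_one_left (by rw [← sq]; exact hg.2.1 i)]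
    exact gen i hi y ih

/-- If all generators but the last fix `a`, the orbits of `a` under two standard subgroups meet
in the orbit under the standard subgroup of the common generators. -/
lemma exists_mem_closure_inter (hg : IsSggi g)
    (hfix : ∀ i : Fin n, (i : ℕ) + 1 < n → g i • a = a) (I J : Set (Fin n)) {F : A}
    (hI : ∃ κ ∈ Subgroup.closure (g '' I), κ • a = F)
    (hJ : ∃ κ ∈ Subgroup.closure (g '' J), κ • a = F) :
    ∃ κ ∈ Subgroup.closure (g '' (I ∩ J)), κ • a = F := by
  obtain ⟨κ, hκ, rfl⟩ := hI
  obtain ⟨ν, hν, hνκ⟩ := hJ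
  rcases finalRun_total I J with h | h
  · obtain ⟨θ, hθ, hθa⟩ := exists_mem_closure_finalRun hg hfix I hκ
    exact ⟨θ, Subgroup.closure_mono (Set.image_mono
      (Set.subset_inter (finalRun_subset I) (h.trans (finalRun_subset J)))) hθ, hθa⟩
  · obtain ⟨θ, hθ, hθa⟩ := exists_mem_closure_finalRun hg hfix J hν
    exact ⟨θ, Subgroup.closure_mono (Set.image_mono
      (Set.subset_inter (h.trans (finalRun_subset I)) (finalRun_subset J))) hθ, hθa.trans hνκ⟩

end Orbits

section Wreath

variable {G A : Type*} [Group G] {φ : G →* MulAut (Multiplicative (A →₀ ZMod 2))}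

lemma mem_map_inr {K : Subgroup G} {p : Multiplicative (A →₀ ZMod 2) ⋊[φ] G} :
    p ∈ K.map SemidirectProduct.inr ↔ p.left = 1 ∧ p.right ∈ K := by
  constructor
  · rintro ⟨κ, hκ, rfl⟩
    exact ⟨rfl, hκ⟩
  · rintro ⟨h1, h2⟩
    exact ⟨p.right, h2, by ext1 <;> simp [h1]⟩

lemma card_wreath [Finite A] :
    Nat.card (Multiplicative (A →₀ ZMod 2) ⋊[φ] G) = Nat.card G * 2 ^ Nat.card A := by
  have h : Nat.card (Multiplicative (A →₀ ZMod 2)) = 2 ^ Nat.card A := by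
    rw [Nat.card_congr (Multiplicative.toAdd.trans Finsupp.equivFunOnFinite), Nat.card_fun,
      Nat.card_zmod]
  rw [SemidirectProduct.card, h, mul_comm]

variable [MulAction G A]

/-- The indicator function of `a`, as an element of the multiplicative group of finitely supported
functions. -/
noncomputable def delta (a : A) : Multiplicative (A →₀ ZMod 2) :=
  Multiplicative.ofAdd (Finsupp.single a 1)

lemma delta_mul_self (a : A) : delta a * delta a = 1 := by
  rw [delta, ← ofAdd_add, ← Finsupp.single_add, show (1 : ZMod 2) + 1 = 0 from rfl]
  simp

lemma delta_injective : Function.Injective (delta : A → Multiplicative (A →₀ ZMod 2)) :=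
  fun _ _ h => Finsupp.single_left_injective one_ne_zero (Multiplicative.ofAdd.injective h)

lemma delta_ne_one (a : A) : delta a ≠ 1 := by
  intro h
  have : Finsupp.single a (1 : ZMod 2) = 0 := Multiplicative.ofAdd.injective h
  simp at this

lemma apply_delta
    (hφ : ∀ (γ : G) (x : A →₀ ZMod 2) (F : A),
      Multiplicative.toAdd (φ γ (Multiplicative.ofAdd x)) F = x (γ⁻¹ • F))
    (γ : G) (a : A) : φ γ (delta a) = delta (γ • a) := by
  apply Multiplicative.toAdd.injective
  ext F
  rw [delta, hφ]
  classical
  simp [delta, Finsupp.single_apply, eq_inv_smul_iff]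

/-- The wreath-type subgroup of the pairs `(x, γ)` with `γ ∈ K` and `x` supported on the `K`-orbit
of `a`. -/
def wreathSubgroup
    (hφ : ∀ (γ : G) (x : A →₀ ZMod 2) (F : A),
      Multiplicative.toAdd (φ γ (Multiplicative.ofAdd x)) F = x (γ⁻¹ • F))
    (K : Subgroup G) (a : A) : Subgroup (Multiplicative (A →₀ ZMod 2) ⋊[φ] G) where
  carrier := {p | p.right ∈ K ∧
    ∀ F, Multiplicative.toAdd p.left F ≠ 0 → ∃ κ ∈ K, κ • a = F}
  one_mem' := ⟨one_mem K, fun F h => absurd rfl h⟩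
  mul_mem' := by
    rintro p q ⟨hp, hp'⟩ ⟨hq, hq'⟩
    refine ⟨mul_mem hp hq, fun F hF => ?_⟩
    by_cases h : Multiplicative.toAdd p.left F = 0
    · have hF' : Multiplicative.toAdd q.left (p.right⁻¹ • F) ≠ 0 := by
        rw [SemidirectProduct.mul_left, toAdd_mul, Finsupp.add_apply, h, zero_add] at hF
        rwa [← hφ p.right (Multiplicative.toAdd q.left) F, ofAdd_toAdd]
      obtain ⟨κ, hκ, h⟩ := hq' _ hF'
      exact ⟨p.right * κ, mul_mem hp hκ, by rw [mul_smul, h, smul_inv_smul]⟩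
    · exact hp' F h
  inv_mem' := by
    rintro p ⟨hp, hp'⟩
    refine ⟨inv_mem hp, fun F hF => ?_⟩
    have hF' : Multiplicative.toAdd p.left (p.right • F) ≠ 0 := by
      intro h
      apply hF
      rw [SemidirectProduct.inv_left,
        ← ofAdd_toAdd (p.left⁻¹), hφ, inv_inv, toAdd_inv, Finsupp.neg_apply, h, neg_zero]
    obtain ⟨κ, hκ, h⟩ := hp' _ hF'
    exact ⟨p.right⁻¹ * κ, mul_mem (inv_mem hp) hκ, by rw [mul_smul, h, inv_smul_smul]⟩

lemma mem_wreathSubgroup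
    (hφ : ∀ (γ : G) (x : A →₀ ZMod 2) (F : A),
      Multiplicative.toAdd (φ γ (Multiplicative.ofAdd x)) F = x (γ⁻¹ • F))
    {K : Subgroup G} {a : A} {p : Multiplicative (A →₀ ZMod 2) ⋊[φ] G} :
    p ∈ wreathSubgroup hφ K a ↔ p.right ∈ K ∧
      ∀ F, Multiplicative.toAdd p.left F ≠ 0 → ∃ κ ∈ K, κ • a = F :=
  Iff.rfl

lemma closure_insert_delta
    (hφ : ∀ (γ : G) (x : A →₀ ZMod 2) (F : A),
      Multiplicative.toAdd (φ γ (Multiplicative.ofAdd x)) F = x (γ⁻¹ • F))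
    (X : Set G) (a : A) :
    Subgroup.closure (insert (SemidirectProduct.inl (delta a))
        ((SemidirectProduct.inr : G →* Multiplicative (A →₀ ZMod 2) ⋊[φ] G) '' X))
      = wreathSubgroup hφ (Subgroup.closure X) a := by
  set H := Subgroup.closure (insert (SemidirectProduct.inl (delta a))
        ((SemidirectProduct.inr : G →* Multiplicative (A →₀ ZMod 2) ⋊[φ] G) '' X)) with hH
  apply le_antisymm
  · rw [hH, Subgroup.closure_le]
    rintro _ (rfl | ⟨x, hx, rfl⟩)
    · refine ⟨one_mem _, fun F hF => ⟨1, one_mem _, ?_⟩⟩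
      by_contra hne
      rw [one_smul] at hne
      exact hF (Finsupp.single_eq_of_ne (Ne.symm hne))
    · exact ⟨Subgroup.subset_closure hx, fun F hF => absurd rfl hF⟩
  · have hr : ∀ κ ∈ Subgroup.closure X, SemidirectProduct.inr κ ∈ H := fun κ hκ => by
      have : (Subgroup.closure X).map SemidirectProduct.inr ≤ H := by
        rw [MonoidHom.map_closure]
        exact Subgroup.closure_mono (Set.subset_insert _ _)
      exact this ⟨κ, hκ, rfl⟩
    have hd : ∀ κ ∈ Subgroup.closure X,
        (SemidirectProduct.inl (delta (κ • a)) : Multiplicative (A →₀ ZMod 2) ⋊[φ] G) ∈ H := by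
      intro κ hκ
      rw [← apply_delta hφ, SemidirectProduct.inl_aut]
      exact mul_mem (mul_mem (hr κ hκ) (Subgroup.subset_closure (Set.mem_insert _ _)))
        (hr _ (inv_mem hκ))
    have hl : ∀ x : A →₀ ZMod 2, (∀ F, x F ≠ 0 → ∃ κ ∈ Subgroup.closure X, κ • a = F) →
        (SemidirectProduct.inl (Multiplicative.ofAdd x) :
          Multiplicative (A →₀ ZMod 2) ⋊[φ] G) ∈ H := by
      intro x
      induction x using Finsupp.induction with
      | zero => intro _; simp
      | single_add b c f hb hc ih =>
        intro hx
        rw [ofAdd_add, map_mul]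
        have hfb : f b = 0 := by simpa using hb
        refine mul_mem ?_ (ih fun F hF => hx F ?_)
        · obtain ⟨κ, hκ, rfl⟩ := hx b (by simpa [hfb] using hc)
          rw [Fin.eq_one_of_ne_zero c hc]
          exact hd κ hκ
        · have : b ≠ F := by rintro rfl; exact hF hfb
          rwa [Finsupp.add_apply, Finsupp.single_eq_of_ne (Ne.symm this), zero_add]
    rintro p ⟨hp, hp'⟩
    rw [← SemidirectProduct.inl_left_mul_inr_right p]
    exact mul_mem (hl _ hp') (hr _ hp)

lemma orderOf_inr_mul_inl_delta
    (hφ : ∀ (γ : G) (x : A →₀ ZMod 2) (F : A),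
      Multiplicative.toAdd (φ γ (Multiplicative.ofAdd x)) F = x (γ⁻¹ • F))
    {γ : G} {a : A} (hγ : γ ^ 2 = 1) (ha : γ • a ≠ a) :
    orderOf (SemidirectProduct.inr γ * SemidirectProduct.inl (delta a) :
      Multiplicative (A →₀ ZMod 2) ⋊[φ] G) = 4 := by
  have hsq : (SemidirectProduct.inr γ * SemidirectProduct.inl (delta a) :
      Multiplicative (A →₀ ZMod 2) ⋊[φ] G) ^ 2
        = SemidirectProduct.inl (delta (γ • a) * delta a) := by
    have hγ' : γ * γ = 1 := by rw [← sq, hγ]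
    rw [sq]
    ext1
    · simp [apply_delta hφ, smul_smul, hγ']
    · simp [hγ']
  have : Fact (Nat.Prime 2) := ⟨Nat.prime_two⟩
  refine orderOf_eq_prime_pow (p := 2) (n := 1) ?_ ?_
  · rw [pow_one, hsq]
    intro h
    rw [← map_one SemidirectProduct.inl, SemidirectProduct.inl_inj] at h
    refine ha (delta_injective ?_)
    rw [eq_inv_of_mul_eq_one_left h, inv_eq_of_mul_eq_one_left (delta_mul_self a)]
  · rw [pow_succ 2 1, pow_mul, pow_one, hsq, ← map_pow, sq, mul_mul_mul_comm,
      delta_mul_self, delta_mul_self, one_mul, map_one]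

end Wreath

/-- In a string C-group, a generator is not in the subgroup generated by the others. -/
lemma IsStringCGroup.notMem_closure {G : Type*} [Group G] {n : ℕ} {g : Fin n → G}
    (hg : IsStringCGroup g) {i : Fin n} {I : Set (Fin n)} (hi : i ∉ I) :
    g i ∉ Subgroup.closure (g '' I) := by
  intro h
  have h2 := hg.2.2 {i} I
  rw [Set.singleton_inter_eq_empty.2 hi, Set.image_empty, Subgroup.closure_empty] at h2
  have h3 : g i ∈ (⊥ : Subgroup G) := by
    rw [← h2]
    exact ⟨Subgroup.subset_closure ⟨i, rfl, rfl⟩, h⟩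
  have h4 := hg.2.1 i
  rw [Subgroup.mem_bot.1 h3, orderOf_one] at h4
  omega

/-- **The wreath-product construction of Lemma 2K, group-theoretically.**  Let
`Γ = ⟨ρ 0, ..., ρ (m-1)⟩` be a string C-group of rank `m ≥ 1` acting transitively
on a nonempty set `A`, with the stabilizer of `a ∈ A` equal to
`⟨ρ 0, ..., ρ (m-2)⟩`.  Let `N` be the group of finitely supported functions
`A → ℤ/2ℤ`, with `Γ` acting by permuting coordinates (`(γ · x)(F) = x(γ⁻¹ · F)`,
hypothesis `hφ`), and let `S = N ⋊ Γ`.  Let `s i = (0, ρ i)` for `i < m` and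
`s m = (δ_a, 1)`.  Then (i) `S` is generated by the `s i`, each of order `2`;
(ii) `S` with these `m+1` generators is a string C-group of rank `m+1`;
(iii) `⟨s 0, ..., s (m-1)⟩` equals `{0} ⋊ Γ` and is isomorphic to `Γ` via
`ρ i ↦ s i`; (iv) `orderOf (s (j-1) * s j) = orderOf (ρ (j-1) * ρ j)` for
`1 ≤ j ≤ m-1`, and `s (m-1) * s m` has order `4`; (v) if `Γ` and `A` are finite
then `|S| = |Γ| · 2^{|A|}`. -/
theorem wreath_extension_is_stringCGroup {m : ℕ} (hm : 1 ≤ m) {Γ : Type} [Group Γ]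
    (ρ : Fin m → Γ) (hΓ : IsStringCGroup ρ)
    {A : Type} [Nonempty A] [MulAction Γ A]
    (htrans : ∀ x y : A, ∃ γ : Γ, γ • x = y)
    (a : A)
    (hstab : MulAction.stabilizer Γ a
      = Subgroup.closure {x : Γ | ∃ i : Fin m, (i : ℤ) ≤ (m : ℤ) - 2 ∧ ρ i = x})
    (φ : Γ →* MulAut (Multiplicative (A →₀ ZMod 2)))
    (hφ : ∀ (γ : Γ) (x : A →₀ ZMod 2) (F : A),
      Multiplicative.toAdd (φ γ (Multiplicative.ofAdd x)) F = x (γ⁻¹ • F)) :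
    ∀ s : Fin (m + 1) → Multiplicative (A →₀ ZMod 2) ⋊[φ] Γ,
      (∀ (i : Fin (m + 1)) (h : (i : ℕ) < m),
        s i = SemidirectProduct.inr (ρ ⟨i, h⟩)) →
      s (Fin.last m)
          = SemidirectProduct.inl (Multiplicative.ofAdd (Finsupp.single a 1)) →
      -- (i) `S` is generated by `s 0, ..., s m`, each of order `2`
      (Subgroup.closure (Set.range s) = ⊤ ∧ ∀ i, orderOf (s i) = 2) ∧
      -- (ii) `S` with these generators is a string C-group of rank `m+1`
      IsStringCGroup s ∧
      -- (iii) `⟨s 0, ..., s (m-1)⟩ = {0} ⋊ Γ ≅ Γ` via `ρ i ↦ s i`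
      (Subgroup.closure (Set.range fun i : Fin m => s i.castSucc)
          = (SemidirectProduct.inr :
              Γ →* Multiplicative (A →₀ ZMod 2) ⋊[φ] Γ).range ∧
        ∃ ψ : Γ →* Multiplicative (A →₀ ZMod 2) ⋊[φ] Γ,
          Function.Injective ψ ∧ ∀ i : Fin m, ψ (ρ i) = s i.castSucc) ∧
      -- (iv) the Schläfli type is `{p_1, ..., p_{m-1}, 4}`
      ((∀ j : ℕ, (h1 : 1 ≤ j) → (h2 : j ≤ m - 1) →
          orderOf (s ⟨j - 1, by omega⟩ * s ⟨j, by omega⟩)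
            = orderOf (ρ ⟨j - 1, by omega⟩ * ρ ⟨j, by omega⟩)) ∧
        orderOf (s ⟨m - 1, by omega⟩ * s ⟨m, by omega⟩) = 4) ∧
      -- (v) if `Γ` and `A` are finite then `|S| = |Γ| · 2^{|A|}`
      (Finite Γ → Finite A →
        Nat.card (Multiplicative (A →₀ ZMod 2) ⋊[φ] Γ)
          = Nat.card Γ * 2 ^ Nat.card A) := by
  intro s hs hlast
  change s (Fin.last m) = SemidirectProduct.inl (delta a) at hlast
  have hs' : ∀ i : Fin m, s i.castSucc = SemidirectProduct.inr (ρ i) := fun i => hs _ i.2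
  have hfix : ∀ i : Fin m, (i : ℕ) + 1 < m → ρ i • a = a := fun i hi => by
    rw [← mem_stabilizer_iff, hstab]
    exact Subgroup.subset_closure ⟨i, by omega, rfl⟩
  have hmove : ρ ⟨m - 1, by omega⟩ • a ≠ a := by
    rw [Ne, ← mem_stabilizer_iff, hstab]
    exact hΓ.notMem_closure (I := {i : Fin m | (i : ℤ) ≤ (m : ℤ) - 2}) (by
      simp only [Set.mem_ofPred_eq]; omega)
  -- the standard subgroups of `S`
  have hwithout : ∀ I : Set (Fin (m + 1)), Fin.last m ∉ I → Subgroup.closure (s '' I)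
      = (Subgroup.closure (ρ '' (Fin.castSucc ⁻¹' I))).map SemidirectProduct.inr := by
    intro I hI
    rw [MonoidHom.map_closure]
    congr 1
    ext p
    constructor
    · rintro ⟨i, hi, rfl⟩
      induction i using Fin.lastCases with
      | last => exact absurd hi hI
      | cast i => exact ⟨ρ i, ⟨i, hi, rfl⟩, (hs' i).symm⟩
    · rintro ⟨_, ⟨i, hi, rfl⟩, rfl⟩
      exact ⟨i.castSucc, hi, hs' i⟩
  have hwith : ∀ I : Set (Fin (m + 1)), Fin.last m ∈ I → Subgroup.closure (s '' I)
      = wreathSubgroup hφ (Subgroup.closure (ρ '' (Fin.castSucc ⁻¹' I))) a := by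
    intro I hI
    rw [← closure_insert_delta]
    congr 1
    ext p
    constructor
    · rintro ⟨i, hi, rfl⟩
      induction i using Fin.lastCases with
      | last => exact Or.inl hlast
      | cast i => exact Or.inr ⟨ρ i, ⟨i, hi, rfl⟩, (hs' i).symm⟩
    · rintro (rfl | ⟨_, ⟨i, hi, rfl⟩, rfl⟩)
      · exact ⟨_, hI, hlast⟩
      · exact ⟨i.castSucc, hi, hs' i⟩
  have hgen : Subgroup.closure (Set.range s) = ⊤ := by
    rw [← Set.image_univ, hwith _ (Set.mem_univ _), Set.preimage_univ, Set.image_univ, hΓ.1.1,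
      eq_top_iff]
    intro p _
    exact ⟨Subgroup.mem_top _, fun F _ => (htrans a F).imp fun γ h => ⟨Subgroup.mem_top _, h⟩⟩
  have hord : ∀ i, orderOf (s i) = 2 := by
    intro i
    induction i using Fin.lastCases with
    | last =>
      rw [hlast, orderOf_injective _ SemidirectProduct.inl_injective]
      exact orderOf_eq_prime (by rw [sq, delta_mul_self]) (delta_ne_one a)
    | cast i =>
      rw [hs', orderOf_injective _ SemidirectProduct.inr_injective]
      exact hΓ.2.1 i
  have hsq : ∀ i, s i ^ 2 = 1 := fun i => orderOf_dvd_iff_pow_eq_one.1 (hord i).dvd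
  have hcomm : ∀ i : Fin m, (i : ℕ) + 1 < m → Commute (s i.castSucc) (s (Fin.last m)) := by
    intro i hi
    rw [hs', hlast, Commute, SemiconjBy]
    ext1 <;> simp [apply_delta hφ, hfix i hi]
  have hstring : ∀ i j : Fin (m + 1), 1 < |(i : ℤ) - (j : ℤ)| → (s i * s j) ^ 2 = 1 := by
    intro i j hij
    induction i using Fin.lastCases with
    | last =>
      induction j using Fin.lastCases with
      | last => simp at hij
      | cast j =>
        rw [Fin.val_last, Fin.val_castSucc, lt_abs] at hij
        rw [(hcomm j (by omega)).symm.mul_pow, hsq, hsq, one_mul]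
    | cast i =>
      induction j using Fin.lastCases with
      | last =>
        rw [Fin.val_last, Fin.val_castSucc, lt_abs] at hij
        rw [(hcomm i (by omega)).mul_pow, hsq, hsq, one_mul]
      | cast j =>
        rw [hs', hs', ← map_mul, ← map_pow, hΓ.1.2.2 i j hij, map_one]
  have hinter : ∀ I J : Set (Fin (m + 1)),
      Subgroup.closure (s '' I) ⊓ Subgroup.closure (s '' J)
        = Subgroup.closure (s '' (I ∩ J)) := by
    intro I J
    refine le_antisymm ?_ (le_inf
      (Subgroup.closure_mono (Set.image_mono Set.inter_subset_left))
      (Subgroup.closure_mono (Set.image_mono Set.inter_subset_right)))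
    have hρ := (hΓ.2.2 (Fin.castSucc ⁻¹' I) (Fin.castSucc ⁻¹' J)).le
    intro p hp
    obtain ⟨hpI, hpJ⟩ := Subgroup.mem_inf.1 hp
    by_cases hI : Fin.last m ∈ I <;> by_cases hJ : Fin.last m ∈ J
    · rw [hwith _ hI, mem_wreathSubgroup] at hpI
      rw [hwith _ hJ, mem_wreathSubgroup] at hpJ
      rw [hwith (I ∩ J) ⟨hI, hJ⟩, mem_wreathSubgroup, Set.preimage_inter]
      exact ⟨hρ ⟨hpI.1, hpJ.1⟩, fun F hF =>
        exists_mem_closure_inter hΓ.1 hfix _ _ (hpI.2 F hF) (hpJ.2 F hF)⟩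
    · rw [hwith _ hI, mem_wreathSubgroup] at hpI
      rw [hwithout _ hJ, mem_map_inr] at hpJ
      rw [hwithout _ fun h => hJ h.2, mem_map_inr, Set.preimage_inter]
      exact ⟨hpJ.1, hρ ⟨hpI.1, hpJ.2⟩⟩
    · rw [hwithout _ hI, mem_map_inr] at hpI
      rw [hwith _ hJ, mem_wreathSubgroup] at hpJ
      rw [hwithout _ fun h => hI h.1, mem_map_inr, Set.preimage_inter]
      exact ⟨hpI.1, hρ ⟨hpI.2, hpJ.1⟩⟩
    · rw [hwithout _ hI, mem_map_inr] at hpI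
      rw [hwithout _ hJ, mem_map_inr] at hpJ
      rw [hwithout _ fun h => hI h.1, mem_map_inr, Set.preimage_inter]
      exact ⟨hpI.1, hρ ⟨hpI.2, hpJ.2⟩⟩
  refine ⟨⟨hgen, hord⟩, ⟨⟨hgen, hsq, hstring⟩, hord, hinter⟩,
    ⟨?_, SemidirectProduct.inr, SemidirectProduct.inr_injective, fun i => (hs' i).symm⟩,
    ⟨fun j h1 h2 => ?_, ?_⟩, fun _ _ => card_wreath⟩
  · rw [funext hs', ← Function.comp_def, Set.range_comp, ← MonoidHom.map_closure, hΓ.1.1,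
      MonoidHom.range_eq_map]
  · rw [hs ⟨j - 1, by omega⟩ (by simp only; omega), hs ⟨j, by omega⟩ (by simp only; omega),
      ← map_mul, orderOf_injective _ SemidirectProduct.inr_injective]
  · rw [hs ⟨m - 1, by omega⟩ (by simp only; omega), show (⟨m, by omega⟩ : Fin (m + 1)) = Fin.last m
      from rfl, hlast]
    exact orderOf_inr_mul_inl_delta hφ (hΓ.1.2.1 _) hmove
end

section
/- Let R be a regular n-polytope with base flag Φ, automorphism group Γ(R) = ⟨ρ_0, ..., ρ_{n-1}⟩ (where ρ_j is the unique automorphism mapping Φ to the j-adjacent flag Φ^j), and monodromy group Mon(R) = ⟨g_0, ..., g_{n-1}⟩. Then there is a group isomorphism Γ(R) ≅ Mon(R) mapping ρ_j to g_j for each j. -/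
section FlagAdjacency

variable {P : Type*} [PartialOrder P] {n : ℤ} {rk : P → ℤ}

lemma IsPolytopeAdj.symm {j : ℤ} {c d : Flag P} (h : IsPolytopeAdj rk j c d) :
    IsPolytopeAdj rk j d c :=
  ⟨h.1.symm, fun z hz => (h.2 z hz).symm⟩

lemma Flag.eq_of_subset {c d : Flag P} (h : ∀ z ∈ c, z ∈ d) : c = d :=
  Flag.ext (c.maxChain.2 d.chain_le h)

/-- A flag with a `j`-adjacent flag contains a face of rank `j`. -/
lemma IsPolytopeAdj.exists_rank_eq {j : ℤ} {c d : Flag P} (h : IsPolytopeAdj rk j c d) :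
    ∃ z ∈ c, rk z = j := by
  by_contra! hc
  exact h.1 (Flag.eq_of_subset fun z hz => (h.2 z (hc z hz)).1 hz)

lemma IsPolytopeAdj.exists_rank_iff {j : ℤ} {c d : Flag P} (h : IsPolytopeAdj rk j c d) (k : ℤ) :
    (∃ z ∈ c, rk z = k) ↔ ∃ z ∈ d, rk z = k := by
  by_cases hk : k = j
  · subst hk
    exact iff_of_true h.exists_rank_eq h.symm.exists_rank_eq
  · exact exists_congr fun z => and_congr_left fun hz => h.2 z (hz ▸ hk)

namespace IsAbstractPolytope

/-- The flag graph of an abstract polytope is connected. -/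
lemma flag_connected (hP : IsAbstractPolytope n rk) (c d : Flag P) :
    Relation.ReflTransGen (fun c' d' => ∃ j : ℤ, IsPolytopeAdj rk j c' d') c d := by
  obtain ⟨B, hB⟩ := hP.exists_bot
  obtain ⟨T, hT⟩ := hP.exists_top
  let e : Set.Icc B T ≃o P :=
    { toFun := Subtype.val
      invFun := fun x => ⟨x, hB x, hT x⟩
      left_inv := fun _ => rfl
      right_inv := fun _ => rfl
      map_rel_iff' := Iff.rfl }
  have mem_map (a : Flag (Set.Icc B T)) (z : P) : z ∈ Flag.map e a ↔ e.symm z ∈ a := by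
    rw [← SetLike.mem_coe, Flag.coe_map, e.image_eq_preimage_symm]
    rfl
  have h := (hP.strongly_connected B T (hB T) ((Flag.map e).symm c) ((Flag.map e).symm d)).lift
    (p := fun c' d' => ∃ j : ℤ, IsPolytopeAdj rk j c' d') (Flag.map e) <| by
      rintro a b ⟨j, hne, hab⟩
      refine ⟨j, (Flag.map e).injective.ne hne, fun z hz => ?_⟩
      rw [mem_map, mem_map]
      exact hab (e.symm z) hz
  simpa only [Function.onFun, Equiv.apply_symm_apply] using h

lemma rank_mem (hP : IsAbstractPolytope n rk) (x : P) : rk x ∈ Set.Icc (-1 : ℤ) n :=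
  hP.rank_range ▸ Set.mem_range_self x

/-- Every flag of an abstract polytope contains a face of each rank. -/
lemma exists_mem_rank_eq (hP : IsAbstractPolytope n rk) (c : Flag P) {k : ℤ}
    (hk : k ∈ Set.Icc (-1 : ℤ) n) : ∃ z ∈ c, rk z = k := by
  obtain ⟨x, rfl⟩ := hP.rank_range.symm ▸ hk
  obtain ⟨d, hd⟩ := Flag.exists_mem x
  induction hP.flag_connected d c with
  | refl => exact ⟨x, hd, rfl⟩
  | tail _ h ih =>
    obtain ⟨j, hj⟩ := h
    exact (hj.exists_rank_iff _).1 ih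

lemma lt_of_rank_lt (hP : IsAbstractPolytope n rk) {c : Flag P} {x y : P}
    (hx : x ∈ c) (hy : y ∈ c) (h : rk x < rk y) : x < y := by
  refine (c.le_or_le hx hy).elim (fun hxy => hxy.lt_of_ne ?_) fun hyx => ?_
  · rintro rfl
    exact h.false
  · rcases hyx.lt_or_eq with hlt | rfl
    · exact absurd (hP.strictMono hlt) h.asymm
    · exact h.false.elim

lemma eq_of_rank_eq (hP : IsAbstractPolytope n rk) {c : Flag P} {x y : P}
    (hx : x ∈ c) (hy : y ∈ c) (h : rk x = rk y) : x = y := by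
  by_contra hne
  rcases c.le_or_le hx hy with hxy | hyx
  · exact (hP.strictMono (hxy.lt_of_ne hne)).ne h
  · exact (hP.strictMono (hyx.lt_of_ne' hne)).ne' h

/-- `j`-adjacent flags have no face of rank `j` in common. -/
lemma notMem_of_adj (hP : IsAbstractPolytope n rk) {j : ℤ} {c d : Flag P}
    (h : IsPolytopeAdj rk j c d) {x : P} (hx : x ∈ c) (hxj : rk x = j) : x ∉ d := by
  refine fun hxd => h.1 (Flag.eq_of_subset fun z hz => ?_)
  by_cases hzj : rk z = j
  · rwa [hP.eq_of_rank_eq hz hx (hzj.trans hxj.symm)]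
  · exact (h.2 z hzj).1 hz

lemma rank_le_rank_apply (hP : IsAbstractPolytope n rk) (e : P ≃o P) (x : P) :
    rk x ≤ rk (e x) := by
  have key : ∀ m : ℕ, ∀ x, rk x = m - 1 → rk x ≤ rk (e x) := by
    intro m
    induction m with
    | zero =>
      intro x hx
      have := (hP.rank_mem (e x)).1
      push_cast at hx
      omega
    | succ m ih =>
      intro x hx
      push_cast at hx
      obtain ⟨c, hc⟩ := Flag.exists_mem x
      have hxn := (hP.rank_mem x).2
      obtain ⟨y, hy, hyx⟩ := hP.exists_mem_rank_eq c (k := m - 1) ⟨by omega, by omega⟩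
      have hlt := hP.strictMono (e.lt_iff_lt.2 (hP.lt_of_rank_lt hy hc (by omega)))
      have := ih y hyx
      omega
  have := (hP.rank_mem x).1
  exact key (rk x + 1).toNat x (by omega)

/-- Automorphisms of an abstract polytope preserve rank. -/
lemma rank_apply (hP : IsAbstractPolytope n rk) (e : P ≃o P) (x : P) : rk (e x) = rk x := by
  refine (hP.rank_le_rank_apply e x).antisymm' ?_
  simpa using hP.rank_le_rank_apply e.symm (e x)

/-- The rank in which two adjacent flags differ lies strictly between `-1` and `n`. -/
lemma rank_mem_of_adj (hP : IsAbstractPolytope n rk) {j : ℤ} {c d : Flag P}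
    (h : IsPolytopeAdj rk j c d) : 0 ≤ j ∧ j < n := by
  obtain ⟨B, hB⟩ := hP.exists_bot
  obtain ⟨T, hT⟩ := hP.exists_top
  obtain ⟨x, hx, hxj⟩ := h.exists_rank_eq
  have hxr := hP.rank_mem x
  have hBd : B ∈ d := Flag.mem_iff_forall_le_or_ge.2 fun b _ => Or.inl (hB b)
  have hTd : T ∈ d := Flag.mem_iff_forall_le_or_ge.2 fun b _ => Or.inr (hT b)
  have hxd : x ∉ d := hP.notMem_of_adj h hx hxj
  have hBx : B < x := (hB x).lt_of_ne fun hBx => hxd (hBx ▸ hBd)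
  have hxT : x < T := (hT x).lt_of_ne fun hxT => hxd (hxT ▸ hTd)
  have h₁ := hP.strictMono hBx
  have h₂ := hP.strictMono hxT
  have h₃ := (hP.rank_mem B).1
  have h₄ := (hP.rank_mem T).2
  omega

/-- Each flag has at most one `j`-adjacent flag. -/
lemma adj_unique (hP : IsAbstractPolytope n rk) {j : ℤ} {c d d' : Flag P}
    (h : IsPolytopeAdj rk j c d) (h' : IsPolytopeAdj rk j c d') : d = d' := by
  obtain ⟨hj₀, hjn⟩ := hP.rank_mem_of_adj h
  obtain ⟨F, hF, hFj⟩ := hP.exists_mem_rank_eq c (k := j - 1) ⟨by omega, by omega⟩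
  obtain ⟨G, hG, hGj⟩ := hP.exists_mem_rank_eq c (k := j + 1) ⟨by omega, by omega⟩
  obtain ⟨x, hx, hxj⟩ := h.exists_rank_eq
  obtain ⟨H₁, H₂, -, hH⟩ := hP.diamond F G (hP.lt_of_rank_lt hF hG (by omega)) (by omega)
  have between {a : Flag P} {y : P} (ha : ∀ z : P, rk z ≠ j → (z ∈ c ↔ z ∈ a)) (hy : y ∈ a)
      (hyj : rk y = j) : y = H₁ ∨ y = H₂ :=
    (hH y).1 ⟨hP.lt_of_rank_lt ((ha F (by omega)).1 hF) hy (by omega),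
      hP.lt_of_rank_lt hy ((ha G (by omega)).1 hG) (by omega)⟩
  obtain ⟨y', hy', hyj'⟩ := h'.symm.exists_rank_eq
  refine Flag.eq_of_subset fun z hz => ?_
  by_cases hzj : rk z = j
  · have hx₁₂ := between (fun _ _ => Iff.rfl) hx hxj
    have hz₁₂ := between h.2 hz hzj
    have hy₁₂ := between h'.2 hy' hyj'
    have hzx : z ≠ x := fun e => hP.notMem_of_adj h hx hxj (e ▸ hz)
    have hyx : y' ≠ x := fun e => hP.notMem_of_adj h' hx hxj (e ▸ hy')
    have : z = y' := by grind
    rwa [this]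
  · exact (h'.2 z hzj).1 ((h.2 z hzj).2 hz)

lemma adj_smul (hP : IsAbstractPolytope n rk) (e : P ≃o P) {j : ℤ} {c d : Flag P}
    (h : IsPolytopeAdj rk j c d) : IsPolytopeAdj rk j (e • c) (e • d) := by
  have mem_smul (a : Flag P) (z : P) : z ∈ e • a ↔ e.symm z ∈ a := by
    change z ∈ e '' (a : Set P) ↔ _
    rw [e.image_eq_preimage_symm]
    rfl
  refine ⟨(MulAction.injective e).ne h.1, fun z hz => ?_⟩
  rw [mem_smul, mem_smul]
  exact h.2 _ (by rwa [hP.rank_apply])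

/-- An automorphism fixing a flag is trivial. -/
lemma eq_one_of_smul_eq (hP : IsAbstractPolytope n rk) {e : P ≃o P} {c : Flag P}
    (h : e • c = c) : e = 1 := by
  have fixes (d : Flag P) : e • d = d := by
    induction hP.flag_connected c d with
    | refl => exact h
    | tail _ hadj ih =>
      obtain ⟨j, hj⟩ := hadj
      have hj' := hP.adj_smul e hj
      rw [ih] at hj'
      exact hP.adj_unique hj' hj
  refine RelIso.ext fun x => ?_
  obtain ⟨d, hd⟩ := Flag.exists_mem x
  have hmem : e x ∈ e • d := Set.mem_image_of_mem e hd
  rw [fixes d] at hmem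
  exact hP.eq_of_rank_eq hmem hd (hP.rank_apply e x)

lemma smul_left_injective (hP : IsAbstractPolytope n rk) (c : Flag P) :
    Function.Injective fun e : P ≃o P => e • c := by
  intro a b hab
  have : b⁻¹ * a = 1 := hP.eq_one_of_smul_eq (c := c) (by
    rw [mul_smul, inv_smul_eq_iff]
    exact hab)
  exact (inv_mul_eq_one.1 this).symm

end IsAbstractPolytope

end FlagAdjacency

/-- The right regular representation of a group, `a ↦ (x ↦ x * a⁻¹)`. -/
def rightRegularHom (G : Type*) [Group G] : G →* Equiv.Perm G where
  toFun a := Equiv.mulRight a⁻¹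
  map_one' := by ext; simp
  map_mul' a b := by ext; simp [mul_assoc]

/-- **For a regular `n`-polytope `R`, the automorphism group `Γ(R)` is isomorphic
to the monodromy group `Mon(R)`, via an isomorphism sending each distinguished
generator `ρ_j` (the automorphism mapping the base flag `Φ` to `Φ^j`) to the
monodromy generator `g_j`.**  The isomorphism is expressed as an injective
homomorphism from the full automorphism group `P ≃o P` into the symmetric group
on the flags, with range exactly `Mon(R) = ⟨g_0, ..., g_{n-1}⟩`. -/
theorem aut_iso_monodromy_of_regular {n : ℕ} {P : Type} [PartialOrder P]
    (rk : P → ℤ) (hP : IsAbstractPolytope (n : ℤ) rk)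
    (hreg : IsRegularPolytope (P := P))
    (Φ : Flag P) (ρ : Fin n → (P ≃o P))
    (hρ : ∀ j : Fin n, ∃ Ψ : Flag P,
      (↑Ψ : Set P) = (ρ j) '' (↑Φ : Set P) ∧ IsPolytopeAdj rk (j : ℤ) Φ Ψ)
    (g : Fin n → Equiv.Perm (Flag P))
    (hg : ∀ (j : Fin n) (Λ : Flag P), IsPolytopeAdj rk (j : ℤ) Λ (g j Λ)) :
    ∃ φ : (P ≃o P) →* Equiv.Perm (Flag P),
      Function.Injective φ ∧ φ.range = Subgroup.closure (Set.range g) ∧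
      ∀ j : Fin n, φ (ρ j) = g j := by
  have hρΦ (j : Fin n) : ρ j • Φ = g j Φ := by
    obtain ⟨Ψ, hΨ, hadj⟩ := hρ j
    have : ρ j • Φ = Ψ := Flag.ext hΨ.symm
    rw [this]
    exact hP.adj_unique hadj (hg j Φ)
  have g_smul (j : Fin n) (e : P ≃o P) (Λ : Flag P) : g j (e • Λ) = e • g j Λ :=
    hP.adj_unique (hg j _) (hP.adj_smul e (hg j Λ))
  have ρ_inv (j : Fin n) : (ρ j)⁻¹ = ρ j := by
    refine inv_eq_of_mul_eq_one_left (hP.eq_one_of_smul_eq (c := Φ) ?_)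
    rw [mul_smul, hρΦ, ← g_smul, hρΦ]
    exact hP.adj_unique (hg j _) (hg j Φ).symm
  let E : (P ≃o P) ≃ Flag P := Equiv.ofBijective (fun e => e • Φ)
    ⟨hP.smul_left_injective Φ, fun c => (hreg Φ c).imp fun e he => Flag.ext he⟩
  let φ : (P ≃o P) →* Equiv.Perm (Flag P) :=
    E.permCongrHom.toMonoidHom.comp (rightRegularHom (P ≃o P))
  have φ_apply (a b : P ≃o P) : φ a (b • Φ) = (b * a⁻¹) • Φ := by
    change E ((E.symm (E b)) * a⁻¹) = _
    rw [E.symm_apply_apply]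
    rfl
  have φ_ρ (j : Fin n) : φ (ρ j) = g j := by
    ext1 c
    obtain ⟨b, rfl⟩ := E.surjective c
    change φ (ρ j) (b • Φ) = g j (b • Φ)
    rw [φ_apply, ρ_inv, mul_smul, hρΦ, g_smul]
  have closure_ρ : Subgroup.closure (Set.range ρ) = ⊤ := by
    have reach (c : Flag P) : ∃ w ∈ Subgroup.closure (Set.range ρ), w • Φ = c := by
      induction hP.flag_connected Φ c with
      | refl => exact ⟨1, one_mem _, one_smul _ _⟩
      | tail _ hadj ih =>
        obtain ⟨w, hw, rfl⟩ := ih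
        obtain ⟨j, hj⟩ := hadj
        obtain ⟨hj₀, hjn⟩ := hP.rank_mem_of_adj hj
        lift j to ℕ using hj₀
        let i : Fin n := ⟨j, by exact_mod_cast hjn⟩
        refine ⟨w * ρ i, mul_mem hw (Subgroup.subset_closure ⟨i, rfl⟩), ?_⟩
        rw [mul_smul, hρΦ, ← g_smul]
        exact hP.adj_unique (hg i _) hj
    refine (Subgroup.eq_top_iff' _).2 fun a => ?_
    obtain ⟨w, hw, hwa⟩ := reach (a • Φ)
    exact hP.smul_left_injective Φ hwa ▸ hw
  refine ⟨φ, fun a b hab => ?_, ?_, φ_ρ⟩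
  · have h := DFunLike.congr_fun hab ((1 : P ≃o P) • Φ)
    rw [φ_apply, φ_apply, one_mul, one_mul] at h
    exact inv_injective (hP.smul_left_injective Φ h)
  · rw [MonoidHom.range_eq_map, ← closure_ρ, MonoidHom.map_closure, ← Set.range_comp]
    exact congrArg _ (congrArg _ (funext φ_ρ))
end
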